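/- Let k : (0,∞) → [0,∞) be nonincreasing with ∫₀¹ k(r) dr < ∞, set K(x) = k(|x|) for x ∈ ℝ² \ {0}, and assume K is positive definite, i.e. ∫_{ℝ²}∫_{ℝ²} K(x − y) f(x) f(y) dx dy ≥ 0 for every continuous compactly supported f : ℝ² → ℝ. Define the Riesz-type energy 𝓡(E) = −∫_E ∫_E K(x − y) dx dy. Then, for any regular hexagon H* with |H*| = 1, 𝓡(H*) ≤ 𝓡(H) for every H ∈ 𝓗 with |H| = 1 (equivalently, the regular hexagon maximizes ∫_E∫_E K(x−y) dx dy among unit-area elements of 𝓗). Moreover, if in addition k is strictly decreasing on (0,∞), then every minimizer of 𝓡 among unit-area elements of 𝓗 is a regular hexagon. -/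

import Mathlib

open MeasureTheory Metric Filter Real Set
open scoped Topology ENNReal NNReal RealInnerProductSpace

noncomputable section

/-- The Euclidean plane. -/
abbrev E2 : Type := EuclideanSpace ℝ (Fin 2)

/-- The line through `x` with direction `v`. -/
def lineThrough (x v : E2) : Set E2 := {y : E2 | ∃ t : ℝ, y = x + t • v}

/-- Steiner symmetrization of `A` with respect to the affine line `{x | ⟪x, v⟫ = c}`,
where `v` is a unit normal vector of the line. -/
def steiner (v : E2) (c : ℝ) (A : Set E2) : Set E2 :=
  {y : E2 | ∃ x : E2, ⟪x, v⟫ = c ∧ (A ∩ lineThrough x v).Nonempty ∧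
    ∃ r : ℝ, y = x + r • v ∧
      ENNReal.ofReal (2 * |r|) ≤ μH[1] (A ∩ lineThrough x v)}

/-- The class `𝓗` of centrally symmetric convex hexagons (possibly degenerated to
parallelograms), i.e. the convex polygons tiling the plane by translations. -/
def Hex (H : Set E2) : Prop :=
  (∃ x₀ p q r : E2, H = (fun y => x₀ + y) '' convexHull ℝ ({p, q, r, -p, -q, -r} : Set E2)) ∧
  (interior H).Nonempty

/-- The `k`-th vertex of the standard regular hexagon. -/
def hexVertex (k : ℕ) : E2 :=
  (WithLp.equiv 2 (Fin 2 → ℝ)).symm ![Real.cos (k * π / 3), Real.sin (k * π / 3)]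

/-- The standard regular hexagon, with vertices `(cos (kπ/3), sin (kπ/3))`, `k = 0, …, 5`. -/
def stdHexagon : Set E2 := convexHull ℝ (Set.range fun k : Fin 6 => hexVertex k)

/-- A similarity of the plane (composition of a rotation, a dilation and a translation,
possibly with a reflection). -/
def IsSimilarity (f : E2 → E2) : Prop :=
  ∃ s : ℝ, 0 < s ∧ ∀ x y, dist (f x) (f y) = s * dist x y

/-- A regular hexagon is any image of the standard one under a similarity. -/
def IsRegularHexagon (H : Set E2) : Prop := ∃ f : E2 → E2, IsSimilarity f ∧ H = f '' stdHexagon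

/-- Convergence of a sequence of sets in the Hausdorff distance. -/
def HausdorffTendsto (Hn : ℕ → Set E2) (H : Set E2) : Prop :=
  Tendsto (fun n => EMetric.hausdorffEdist (Hn n) H) atTop (𝓝 0)

/-- The planar cross product (determinant) of two vectors. -/
def det2 (u w : E2) : ℝ := u 0 * w 1 - u 1 * w 0

/-- `A, B, C, D, E, F` are (consecutive) vertices of the centrally symmetric hexagon `H`:
`H` is their convex hull, `D, E, F` are the antipodes of `A, B, C` with respect to a center
`o`, and `H` has nonempty interior. -/
def HexWithVertices (A B C D E F : E2) (H : Set E2) : Prop :=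
  H = convexHull ℝ ({A, B, C, D, E, F} : Set E2) ∧
  (∃ o : E2, D = (2:ℝ) • o - A ∧ E = (2:ℝ) • o - B ∧ F = (2:ℝ) • o - C) ∧
  (interior H).Nonempty

/-- The vertices `A, B, C, D, E, F` are listed in counterclockwise order. -/
def CCWList (A B C D E F : E2) : Prop :=
  0 ≤ det2 (B - A) (C - B) ∧ 0 ≤ det2 (C - B) (D - C) ∧ 0 ≤ det2 (D - C) (E - D) ∧
  0 ≤ det2 (E - D) (F - E) ∧ 0 ≤ det2 (F - E) (A - F) ∧ 0 ≤ det2 (A - F) (B - A)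

/-- The six vertices are distinct and no three of them are collinear. -/
def NondegenerateHex (A B C D E F : E2) : Prop :=
  [A, B, C, D, E, F].Pairwise (· ≠ ·) ∧
  ∀ P Q R : E2, P ∈ ({A, B, C, D, E, F} : Set E2) → Q ∈ ({A, B, C, D, E, F} : Set E2) →
    R ∈ ({A, B, C, D, E, F} : Set E2) → P ≠ Q → P ≠ R → Q ≠ R →
      ¬ Collinear ℝ ({P, Q, R} : Set E2)

/-- The Riesz-type interaction energy associated with the radial kernel `K(x) = k(|x|)`. -/
def rieszEnergy (k : ℝ → ℝ) (E : Set E2) : ℝ :=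
  -∫ x in E, ∫ y in E, k (dist x y)

/-- Even real functions that are strictly decreasing on `[0, ∞)`. -/
structure EvenStrictAnti (φ : ℝ → ℝ) : Prop where
  even : ∀ x, φ (-x) = φ x
  anti : StrictAntiOn φ (Ici 0)

namespace EvenStrictAnti

variable {φ : ℝ → ℝ}

lemma apply_abs (h : EvenStrictAnti φ) (x : ℝ) : φ |x| = φ x := by
  rcases abs_choice x with hx | hx <;> rw [hx]
  exact h.even x

lemma lt_of_abs_lt (h : EvenStrictAnti φ) {x y : ℝ} (hxy : |x| < |y|) : φ y < φ x := by
  rw [← h.apply_abs x, ← h.apply_abs y]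
  exact h.anti (mem_Ici.2 (abs_nonneg _)) (mem_Ici.2 (abs_nonneg _)) hxy

lemma intervalIntegrable_zero (h : EvenStrictAnti φ) (b : ℝ) :
    IntervalIntegrable φ volume 0 b := by
  have key : ∀ c : ℝ, 0 ≤ c → IntervalIntegrable φ volume 0 c := fun c hc => by
    refine AntitoneOn.intervalIntegrable (h.anti.antitoneOn.mono ?_)
    rw [uIcc_of_le hc]
    exact Icc_subset_Ici_self
  rcases le_total 0 b with hb | hb
  · exact key b hb
  · have := (key (-b) (by linarith)).comp_sub_left 0
    simpa [h.even] using this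

lemma intervalIntegrable (h : EvenStrictAnti φ) (a b : ℝ) :
    IntervalIntegrable φ volume a b :=
  (h.intervalIntegrable_zero a).symm.trans (h.intervalIntegrable_zero b)

/-- Averaging over a symmetric window preserves evenness and strict monotonicity. -/
lemma window (h : EvenStrictAnti φ) {b : ℝ} (hb : 0 < b) :
    EvenStrictAnti fun x => ∫ s in -b..b, φ (x + s) where
  even x := by
    have := intervalIntegral.integral_comp_neg (a := -b) (b := b) (fun s => φ (x + s))
    rw [neg_neg] at this
    rw [← this]
    refine intervalIntegral.integral_congr fun s _ => ?_
    rw [← h.even]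
    congr 1
    ring
  anti := by
    intro x hx y hy hxy
    rw [mem_Ici] at hx hy
    simp only [intervalIntegral.integral_comp_add_left]
    have I := h.intervalIntegrable
    have e : (∫ s in x + -b..x + b, φ s) - ∫ s in y + -b..y + b, φ s
        = ∫ u in x..y, (φ (u - b) - φ (u + b)) := by
      have i1 : IntervalIntegrable (fun u => φ (u - b)) volume x y := by
        simpa using (I (x - b) (y - b)).comp_sub_right b
      have i2 : IntervalIntegrable (fun u => φ (u + b)) volume x y := by
        simpa using (I (x + b) (y + b)).comp_add_right b
      rw [intervalIntegral.integral_sub i1 i2, intervalIntegral.integral_comp_sub_right,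
        intervalIntegral.integral_comp_add_right]
      have e1 := intervalIntegral.integral_add_adjacent_intervals (I (x - b) (x + b))
        (I (x + b) (y + b))
      have e2 := intervalIntegral.integral_add_adjacent_intervals (I (x - b) (y - b))
        (I (y - b) (y + b))
      simp only [← sub_eq_add_neg]
      linarith
    have pos : 0 < ∫ u in x..y, (φ (u - b) - φ (u + b)) := by
      refine intervalIntegral.intervalIntegral_pos_of_pos_on ?_ ?_ hxy
      · refine IntervalIntegrable.sub ?_ ?_
        · simpa using (I (x - b) (y - b)).comp_sub_right b
        · simpa using (I (x + b) (y + b)).comp_add_right b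
      · intro u hu
        refine sub_pos.2 (h.lt_of_abs_lt ?_)
        rw [abs_of_pos (by linarith [hu.1] : 0 < u + b), abs_lt]
        constructor <;> linarith [hu.1]
    linarith

/-- The interaction of two intervals decreases strictly when their centers are separated. -/
lemma interaction_lt (h : EvenStrictAnti φ) {a b t : ℝ} (ha : 0 < a) (hb : 0 < b) (ht : t ≠ 0) :
    ∫ x in -a..a, ∫ s in -b..b, φ (t + x + s) < ∫ x in -a..a, ∫ s in -b..b, φ (x + s) := by
  have := ((h.window hb).window ha).lt_of_abs_lt (x := 0) (y := t) (by simpa using ht)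
  simpa using this

end EvenStrictAnti

/-- Nonnegative nonincreasing radial profiles that are integrable near the origin. -/
structure IsProfile (k : ℝ → ℝ) : Prop where
  anti : AntitoneOn k (Ioi 0)
  nonneg : ∀ r, 0 < r → 0 ≤ k r
  integrableOn : IntegrableOn k (Ioc 0 1)

/-- The extended nonnegative version of the profile `k`, set to `∞` on `(-∞, 0]`. -/
def extProfile (k : ℝ → ℝ) (r : ℝ) : ℝ≥0∞ := if 0 < r then ENNReal.ofReal (k r) else ⊤

/-- The interaction integral `∫_H ∫_H K (x - y)` as an extended nonnegative number. -/
def interaction (k : ℝ → ℝ) (H : Set E2) : ℝ≥0∞ :=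
  ∫⁻ x in H, ∫⁻ y in H, extProfile k (dist x y)

lemma extProfile_of_pos (k : ℝ → ℝ) {r : ℝ} (hr : 0 < r) :
    extProfile k r = ENNReal.ofReal (k r) := if_pos hr

namespace IsProfile

variable {k : ℝ → ℝ}

lemma antitone_extProfile (hk : IsProfile k) : Antitone (extProfile k) := by
  intro r s hrs
  unfold extProfile
  split_ifs with h1 h2 h2
  · exact ENNReal.ofReal_le_ofReal (hk.anti h2 h1 hrs)
  · exact le_top
  · linarith
  · exact le_rfl

lemma measurable_extProfile (hk : IsProfile k) : Measurable (extProfile k) :=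
  hk.antitone_extProfile.measurable

lemma integrableOn_Ioo (hk : IsProfile k) (ρ : ℝ) : IntegrableOn k (Ioo 0 ρ) := by
  have h2 : IntegrableOn k (Icc 1 (max ρ 1)) :=
    (hk.anti.mono fun x hx => lt_of_lt_of_le one_pos hx.1).integrableOn_isCompact isCompact_Icc
  refine (hk.integrableOn.union h2).mono_set fun x hx => ?_
  rcases le_total x 1 with h | h
  · exact Or.inl ⟨hx.1, h⟩
  · exact Or.inr ⟨h, hx.2.le.trans (le_max_left _ _)⟩

lemma lintegral_ball_lt_top (hk : IsProfile k) (ρ : ℝ) :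
    ∫⁻ z in ball (0 : E2) ρ, extProfile k ‖z‖ < ⊤ := by
  have h1 : IntegrableOn (fun y => y ^ (Module.finrank ℝ E2 - 1) • k y) (Ioo 0 ρ) := by
    refine Integrable.bdd_mul (c := max ρ 0) (hk.integrableOn_Ioo ρ) (by fun_prop) ?_
    refine (ae_restrict_iff' measurableSet_Ioo).2 (Eventually.of_forall fun x hx => ?_)
    simp only [finrank_euclideanSpace, Fintype.card_fin, Nat.add_one_sub_one, pow_one]
    rw [Real.norm_of_nonneg hx.1.le]
    exact hx.2.le.trans (le_max_left _ _)
  have h2 := (integrableOn_fun_norm_addHaar (E := E2) volume (f := k) (r := ρ)).2 h1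
  refine lt_of_le_of_lt (lintegral_mono_ae ?_) h2.2
  have : ∀ᵐ z : E2, z ≠ 0 := by simp [ae_iff]
  filter_upwards [ae_restrict_of_ae this] with z hz
  rw [extProfile_of_pos k (norm_pos_iff.2 hz)]
  exact Real.ofReal_le_enorm _

lemma lintegral_ball_dist (hk : IsProfile k) (x : E2) (ρ : ℝ) :
    ∫⁻ y in ball x ρ, extProfile k (dist x y) = ∫⁻ z in ball (0 : E2) ρ, extProfile k ‖z‖ := by
  have hmp := (measurePreserving_add_left (volume : Measure E2) x)
  have := hmp.setLIntegral_comp_preimage (s := ball x ρ) measurableSet_ball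
    (f := fun y => extProfile k (dist x y)) (by
      have := hk.measurable_extProfile
      fun_prop)
  rw [← this]
  simp

lemma lintegral_le (hk : IsProfile k) {H : Set E2} {R : ℝ} (hH : H ⊆ closedBall 0 R) {x : E2}
    (hx : x ∈ H) : ∫⁻ y in H, extProfile k (dist x y) ≤
      ∫⁻ z in ball (0 : E2) (2 * R + 1), extProfile k ‖z‖ := by
  rw [← hk.lintegral_ball_dist x]
  refine lintegral_mono_set fun y hy => ?_
  have h1 := hH hx
  have h2 := hH hy
  rw [mem_closedBall] at h1 h2
  have := dist_triangle_right y x 0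
  rw [mem_ball]
  linarith

lemma interaction_lt_top (hk : IsProfile k) {H : Set E2} {R : ℝ} (hH : H ⊆ closedBall 0 R)
    (hm : MeasurableSet H) : interaction k H < ⊤ := by
  have h1 : interaction k H ≤
      ∫⁻ _ in H, ∫⁻ z in ball (0 : E2) (2 * R + 1), extProfile k ‖z‖ :=
    setLIntegral_mono' hm fun x hx => hk.lintegral_le hH hx
  refine h1.trans_lt ?_
  rw [setLIntegral_const]
  exact ENNReal.mul_lt_top (hk.lintegral_ball_lt_top _)
    ((measure_mono hH).trans_lt measure_closedBall_lt_top)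

lemma rieszEnergy_eq (hk : IsProfile k) {H : Set E2} {R : ℝ} (hH : H ⊆ closedBall 0 R)
    (hm : MeasurableSet H) : rieszEnergy k H = -(interaction k H).toReal := by
  have hmeas := hk.measurable_extProfile
  have inner : ∀ x ∈ H, ∫ y in H, k (dist x y) =
      (∫⁻ y in H, extProfile k (dist x y)).toReal := by
    intro x hx
    have hfin : ∫⁻ y in H, extProfile k (dist x y) ≠ ⊤ :=
      ((hk.lintegral_le hH hx).trans_lt (hk.lintegral_ball_lt_top _)).ne
    rw [← integral_toReal (by fun_prop) (ae_lt_top (by fun_prop) hfin)]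
    refine integral_congr_ae ?_
    have : ∀ᵐ y : E2, y ≠ x := by simp [ae_iff]
    filter_upwards [ae_restrict_of_ae this] with y hy
    have hd := dist_pos.2 hy.symm
    rw [extProfile_of_pos k hd, ENNReal.toReal_ofReal (hk.nonneg _ hd)]
  have hmeas2 : Measurable fun x : E2 => ∫⁻ y in H, extProfile k (dist x y) := by
    refine Measurable.lintegral_prod_right' (f := fun p : E2 × E2 => extProfile k (dist p.1 p.2)) ?_
    fun_prop
  unfold rieszEnergy interaction
  rw [setIntegral_congr_fun hm inner, integral_toReal (by fun_prop)]
  refine (ae_restrict_iff' hm).2 (Eventually.of_forall fun x hx => ?_)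
  exact (hk.lintegral_le hH hx).trans_lt (hk.lintegral_ball_lt_top _)

lemma add (hk : IsProfile k) {g : ℝ → ℝ} (hg : IsProfile g) :
    IsProfile fun r => k r + g r where
  anti := hk.anti.add hg.anti
  nonneg r hr := add_nonneg (hk.nonneg r hr) (hg.nonneg r hr)
  integrableOn := hk.integrableOn.add hg.integrableOn

end IsProfile

lemma interaction_mono {k g : ℝ → ℝ} (h : ∀ r, 0 < r → k r ≤ g r) (H : Set E2) :
    interaction k H ≤ interaction g H := by
  refine lintegral_mono fun x => lintegral_mono fun y => ?_
  unfold extProfile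
  split_ifs with h0
  · exact ENNReal.ofReal_le_ofReal (h _ h0)
  · exact le_rfl

lemma interaction_le_add {k g : ℝ → ℝ} {ε : ℝ≥0} (h : ∀ r, 0 < r → g r ≤ k r + ε) {H : Set E2}
    (hk : IsProfile k) (hH : volume H = 1) :
    interaction g H ≤ interaction k H + ε := by
  have hmeas := hk.measurable_extProfile
  have h1 : interaction g H ≤ ∫⁻ x in H, ∫⁻ y in H, (extProfile k (dist x y) + ε) := by
    refine lintegral_mono fun x => lintegral_mono fun y => ?_
    unfold extProfile
    split_ifs with h0
    · refine (ENNReal.ofReal_le_ofReal (h _ h0)).trans (ENNReal.ofReal_add_le.trans ?_)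
      simp
    · simp
  refine h1.trans (le_of_eq ?_)
  have e (x : E2) : ∫⁻ y in H, (extProfile k (dist x y) + ε) =
      (∫⁻ y in H, extProfile k (dist x y)) + ε := by
    rw [lintegral_add_right _ measurable_const, setLIntegral_const, hH, mul_one]
  simp_rw [e]
  rw [lintegral_add_right _ measurable_const, setLIntegral_const, hH, mul_one]
  rfl

lemma measurePreserving_affineIsometryEquiv (T : E2 ≃ᵃⁱ[ℝ] E2) :
    MeasurePreserving T (volume : Measure E2) volume := by
  have h := (measurePreserving_add_left (volume : Measure E2) (T 0)).comp
    T.linearIsometryEquiv.measurePreserving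
  have e : ⇑T = (fun x => T 0 + x) ∘ T.linearIsometryEquiv := by
    funext x
    have := T.map_vadd 0 x
    simp only [vadd_eq_add, add_zero] at this
    rw [this, Function.comp_apply, add_comm]
  rw [e]
  exact h

lemma interaction_image (k : ℝ → ℝ) (T : E2 ≃ᵃⁱ[ℝ] E2) (H : Set E2) :
    interaction k (T '' H) = interaction k H := by
  have hmp := measurePreserving_affineIsometryEquiv T
  have he : MeasurableEmbedding T := T.toHomeomorph.measurableEmbedding
  unfold interaction
  rw [← hmp.setLIntegral_comp_emb he]
  refine lintegral_congr fun x => ?_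
  rw [← hmp.setLIntegral_comp_emb he]
  simp

lemma volume_image_affineIsometry (T : E2 ≃ᵃⁱ[ℝ] E2) (H : Set E2) :
    volume (T '' H) = volume H := by
  have hmp := measurePreserving_affineIsometryEquiv T
  have he : MeasurableEmbedding T := T.toHomeomorph.measurableEmbedding
  rw [← hmp.measure_preimage_emb he, T.injective.preimage_image]

lemma lintegral_plane {f : E2 → ℝ≥0∞} (hf : Measurable f) :
    ∫⁻ z, f z = ∫⁻ y : ℝ, ∫⁻ x : ℝ, f !₂[x, y] := by
  have h1 := (PiLp.volume_preserving_toLp (Fin 2)).lintegral_comp hf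
  have h2 := ((volume_preserving_finTwoArrow ℝ).symm _).lintegral_comp
    (f := fun v => f (WithLp.toLp 2 v)) (by fun_prop)
  rw [← h1, ← h2, Measure.volume_eq_prod, lintegral_prod_symm']
  · rfl
  · fun_prop

lemma measurable_planePoint : Measurable fun p : ℝ × ℝ => (!₂[p.1, p.2] : E2) := by
  refine (WithLp.measurable_toLp 2 (Fin 2 → ℝ)).comp (measurable_pi_lambda _ fun i => ?_)
  fin_cases i
  · exact measurable_fst
  · exact measurable_snd

/-- The horizontal slice of a planar set at height `y`. -/
def slice (H : Set E2) (y : ℝ) : Set ℝ := {x | !₂[x, y] ∈ H}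

lemma measurableSet_slice {H : Set E2} (hH : MeasurableSet H) (y : ℝ) :
    MeasurableSet (slice H y) :=
  measurable_planePoint.comp measurable_prodMk_right hH

lemma volume_eq_lintegral_slice {H : Set E2} (hH : MeasurableSet H) :
    volume H = ∫⁻ y, volume (slice H y) := by
  rw [← lintegral_indicator_one hH, lintegral_plane (measurable_one.indicator hH)]
  refine lintegral_congr fun y => ?_
  rw [← lintegral_indicator_one (measurableSet_slice hH y)]
  rfl

/-- The interaction of the slices at heights `p.1` and `p.2`. -/
def sliceInteraction (k : ℝ → ℝ) (H : Set E2) (p : ℝ × ℝ) : ℝ≥0∞ :=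
  ∫⁻ x in slice H p.1, ∫⁻ x' in slice H p.2, extProfile k √((x - x') ^ 2 + (p.1 - p.2) ^ 2)

namespace IsProfile

variable {k : ℝ → ℝ}

lemma measurable_plane_interaction (hk : IsProfile k) {H : Set E2} (hH : MeasurableSet H) :
    Measurable fun q : E2 × E2 =>
      H.indicator 1 q.1 * (H.indicator 1 q.2 * extProfile k (dist q.1 q.2)) := by
  have hmeas := hk.measurable_extProfile
  have hi : Measurable (H.indicator (1 : E2 → ℝ≥0∞)) := measurable_one.indicator hH
  fun_prop

lemma interaction_eq_prod (hk : IsProfile k) {H : Set E2} (hH : MeasurableSet H) :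
    interaction k H = ∫⁻ x, ∫⁻ y,
      H.indicator 1 x * (H.indicator 1 y * extProfile k (dist x y)) := by
  have hmeas := hk.measurable_extProfile
  have hi : Measurable (H.indicator (1 : E2 → ℝ≥0∞)) := measurable_one.indicator hH
  unfold interaction
  rw [← lintegral_indicator hH]
  refine lintegral_congr fun x => ?_
  rw [lintegral_const_mul _ (by fun_prop)]
  by_cases hx : x ∈ H
  · rw [indicator_of_mem hx, indicator_of_mem hx, Pi.one_apply, one_mul,
      ← lintegral_indicator hH]
    refine lintegral_congr fun y => ?_
    by_cases hy : y ∈ H <;> simp [hy]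
  · simp [hx]

lemma sliceInteraction_eq (hk : IsProfile k) {H : Set E2} (hH : MeasurableSet H) (p : ℝ × ℝ) :
    sliceInteraction k H p = ∫⁻ x, ∫⁻ x', H.indicator 1 !₂[x, p.1] *
      (H.indicator 1 !₂[x', p.2] * extProfile k (dist (!₂[x, p.1] : E2) !₂[x', p.2])) := by
  have hmeas := hk.measurable_extProfile
  have hi : Measurable (H.indicator (1 : E2 → ℝ≥0∞)) := measurable_one.indicator hH
  have hp (y : ℝ) : Measurable fun x : ℝ => (!₂[x, y] : E2) :=
    measurable_planePoint.comp measurable_prodMk_right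
  have hp1 := hp p.1
  have hp2 := hp p.2
  unfold sliceInteraction
  rw [← lintegral_indicator (measurableSet_slice hH _)]
  refine lintegral_congr fun x => ?_
  rw [lintegral_const_mul _ (by fun_prop)]
  by_cases hx : x ∈ slice H p.1
  · rw [indicator_of_mem hx, indicator_of_mem (show !₂[x, p.1] ∈ H from hx), Pi.one_apply,
      one_mul, ← lintegral_indicator (measurableSet_slice hH _)]
    refine lintegral_congr fun y => ?_
    by_cases hy : y ∈ slice H p.2
    · rw [indicator_of_mem hy, indicator_of_mem (show !₂[y, p.2] ∈ H from hy)]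
      simp [EuclideanSpace.dist_eq, Real.dist_eq]
    · rw [indicator_of_notMem hy, indicator_of_notMem (show !₂[y, p.2] ∉ H from hy), zero_mul]
  · rw [indicator_of_notMem hx, indicator_of_notMem (show !₂[x, p.1] ∉ H from hx), zero_mul]

lemma measurable_sliceInteraction (hk : IsProfile k) {H : Set E2} (hH : MeasurableSet H) :
    Measurable (sliceInteraction k H) := by
  have h := hk.measurable_plane_interaction hH
  simp_rw [funext (hk.sliceInteraction_eq hH)]
  refine Measurable.lintegral_prod_right' (f := fun q : (ℝ × ℝ) × ℝ => ∫⁻ x',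
    H.indicator 1 !₂[q.2, q.1.1] * (H.indicator 1 !₂[x', q.1.2] *
      extProfile k (dist (!₂[q.2, q.1.1] : E2) !₂[x', q.1.2]))) ?_
  refine Measurable.lintegral_prod_right' (f := fun q : ((ℝ × ℝ) × ℝ) × ℝ =>
    H.indicator 1 !₂[q.1.2, q.1.1.1] * (H.indicator 1 !₂[q.2, q.1.1.2] *
      extProfile k (dist (!₂[q.1.2, q.1.1.1] : E2) !₂[q.2, q.1.1.2]))) ?_
  exact h.comp ((measurable_planePoint.comp (by fun_prop :
    Measurable fun q : ((ℝ × ℝ) × ℝ) × ℝ => (q.1.2, q.1.1.1))).prodMk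
    (measurable_planePoint.comp (by fun_prop :
    Measurable fun q : ((ℝ × ℝ) × ℝ) × ℝ => (q.2, q.1.1.2))))

lemma interaction_eq_lintegral_slice (hk : IsProfile k) {H : Set E2} (hH : MeasurableSet H) :
    interaction k H = ∫⁻ p, sliceInteraction k H p := by
  have h := hk.measurable_plane_interaction hH
  rw [hk.interaction_eq_prod hH, lintegral_plane h.lintegral_prod_right', Measure.volume_eq_prod,
    lintegral_prod _ (hk.measurable_sliceInteraction hH).aemeasurable]
  refine lintegral_congr fun y => ?_
  have e (x : ℝ) : ∫⁻ z, H.indicator 1 !₂[x, y] *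
      (H.indicator 1 z * extProfile k (dist (!₂[x, y] : E2) z)) =
      ∫⁻ y', ∫⁻ x', H.indicator 1 !₂[x, y] *
      (H.indicator 1 !₂[x', y'] * extProfile k (dist (!₂[x, y] : E2) !₂[x', y'])) :=
    lintegral_plane (h.comp measurable_prodMk_left)
  simp_rw [e, hk.sliceInteraction_eq hH]
  refine lintegral_lintegral_swap (Measurable.aemeasurable ?_)
  refine Measurable.lintegral_prod_right' (f := fun q : (ℝ × ℝ) × ℝ =>
    H.indicator 1 !₂[q.1.1, y] * (H.indicator 1 !₂[q.2, q.1.2] *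
      extProfile k (dist (!₂[q.1.1, y] : E2) !₂[q.2, q.1.2]))) ?_
  exact h.comp ((measurable_planePoint.comp (by fun_prop :
    Measurable fun q : (ℝ × ℝ) × ℝ => (q.1.1, y))).prodMk
    (measurable_planePoint.comp (by fun_prop :
    Measurable fun q : (ℝ × ℝ) × ℝ => (q.2, q.1.2))))

end IsProfile

lemma setLIntegral_Icc_ofReal {g : ℝ → ℝ} {a b : ℝ} (hab : a ≤ b)
    (hg : IntervalIntegrable g volume a b) (h0 : ∀ x, 0 ≤ g x) :
    ∫⁻ x in Icc a b, ENNReal.ofReal (g x) = ENNReal.ofReal (∫ x in a..b, g x) := by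
  rw [intervalIntegral.integral_of_le hab, ← integral_Icc_eq_integral_Ioc,
    ofReal_integral_eq_lintegral_ofReal _ (Eventually.of_forall h0)]
  exact (integrableOn_Icc_iff_integrableOn_Ioc).2
    ((intervalIntegrable_iff_integrableOn_Ioc_of_le hab).1 hg)

lemma evenStrictAnti_radial {k : ℝ → ℝ} (hs : StrictAntiOn k (Ioi 0)) {d : ℝ} (hd : d ≠ 0) :
    EvenStrictAnti fun s => k √(s ^ 2 + d ^ 2) where
  even x := by simp
  anti x hx y hy hxy := by
    have hd2 := pow_pos (abs_pos.2 hd) 2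
    rw [sq_abs] at hd2
    rw [mem_Ici] at hx hy
    refine hs ?_ ?_ ?_
    · exact Real.sqrt_pos.2 (by positivity)
    · exact Real.sqrt_pos.2 (by positivity)
    · exact Real.sqrt_lt_sqrt (by positivity) (by nlinarith)

lemma lintegral_intervals {k : ℝ → ℝ} (hk : IsProfile k) (hs : StrictAntiOn k (Ioi 0))
    {a b c c' d : ℝ} (ha : 0 < a) (hb : 0 < b) (hd : d ≠ 0) :
    ∫⁻ x in Icc (c - a) (c + a), ∫⁻ x' in Icc (c' - b) (c' + b),
      extProfile k √((x - x') ^ 2 + d ^ 2) = ENNReal.ofReal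
        (∫ x in -a..a, ∫ s in -b..b, k √((c - c' + x + s) ^ 2 + d ^ 2)) := by
  have hφ := evenStrictAnti_radial hs hd
  have hd2 := pow_pos (abs_pos.2 hd) 2
  rw [sq_abs] at hd2
  have hpos (s : ℝ) : 0 < √(s ^ 2 + d ^ 2) := Real.sqrt_pos.2 (by positivity)
  have h0 (s : ℝ) : 0 ≤ k √(s ^ 2 + d ^ 2) := hk.nonneg _ (hpos s)
  have inner (x : ℝ) : ∫⁻ x' in Icc (c' - b) (c' + b), extProfile k √((x - x') ^ 2 + d ^ 2) =
      ENNReal.ofReal (∫ s in -b..b, k √((x - c' + s) ^ 2 + d ^ 2)) := by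
    simp_rw [fun x' : ℝ => extProfile_of_pos k (hpos (x - x'))]
    rw [setLIntegral_Icc_ofReal (by linarith) _ fun x' => h0 (x - x')]
    · rw [intervalIntegral.integral_comp_sub_left (fun u => k √(u ^ 2 + d ^ 2)),
        intervalIntegral.integral_comp_add_left (fun u => k √(u ^ 2 + d ^ 2))]
      congr 2 <;> ring
    · simpa using (hφ.intervalIntegrable (x - (c' - b)) (x - (c' + b))).comp_sub_left x
  simp_rw [inner]
  rw [setLIntegral_Icc_ofReal (g := fun x => ∫ s in -b..b, k √((x - c' + s) ^ 2 + d ^ 2))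
    (by linarith) _ fun x => ?_]
  · rw [intervalIntegral.integral_comp_sub_right
        (fun u => ∫ s in -b..b, k √((u + s) ^ 2 + d ^ 2)),
      intervalIntegral.integral_comp_add_left
        (fun u => ∫ s in -b..b, k √((u + s) ^ 2 + d ^ 2))]
    congr 2 <;> ring
  · simpa using ((hφ.window hb).intervalIntegrable (c - a - c') (c + a - c')).comp_sub_right c'
  · exact intervalIntegral.integral_nonneg (by linarith) fun s _ => h0 _

lemma lintegral_intervals_lt {k : ℝ → ℝ} (hk : IsProfile k) (hs : StrictAntiOn k (Ioi 0))
    {a b c c' d : ℝ} (ha : 0 < a) (hb : 0 < b) (hd : d ≠ 0) (hc : c ≠ c') :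
    ∫⁻ x in Icc (c - a) (c + a), ∫⁻ x' in Icc (c' - b) (c' + b),
      extProfile k √((x - x') ^ 2 + d ^ 2) <
    ∫⁻ x in Icc (0 - a) (0 + a), ∫⁻ x' in Icc (0 - b) (0 + b),
      extProfile k √((x - x') ^ 2 + d ^ 2) := by
  have hd2 := pow_pos (abs_pos.2 hd) 2
  rw [sq_abs] at hd2
  rw [lintegral_intervals hk hs ha hb hd, lintegral_intervals hk hs ha hb hd]
  have h := (evenStrictAnti_radial hs hd).interaction_lt ha hb (sub_ne_zero.2 hc)
  simp only [sub_self, zero_add]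
  refine (ENNReal.ofReal_lt_ofReal_iff_of_nonneg ?_).2 h
  refine intervalIntegral.integral_nonneg (by linarith) fun x _ =>
    intervalIntegral.integral_nonneg (by linarith) fun s _ => hk.nonneg _ ?_
  exact Real.sqrt_pos.2 (by positivity)

lemma lintegral_intervals_le {k : ℝ → ℝ} (hk : IsProfile k) (hs : StrictAntiOn k (Ioi 0))
    {a b c c' d : ℝ} (ha : 0 < a) (hb : 0 < b) (hd : d ≠ 0) :
    ∫⁻ x in Icc (c - a) (c + a), ∫⁻ x' in Icc (c' - b) (c' + b),
      extProfile k √((x - x') ^ 2 + d ^ 2) ≤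
    ∫⁻ x in Icc (0 - a) (0 + a), ∫⁻ x' in Icc (0 - b) (0 + b),
      extProfile k √((x - x') ^ 2 + d ^ 2) := by
  rcases eq_or_ne c c' with rfl | hc
  · rw [lintegral_intervals hk hs ha hb hd, lintegral_intervals hk hs ha hb hd]
    simp
  · exact (lintegral_intervals_lt hk hs ha hb hd hc).le

/-- `H` is the set swept by the segments with center `c y` and half-width `w y`, for `|y| ≤ h`. -/
def IsSwept (H : Set E2) (h : ℝ) (c w : ℝ → ℝ) : Prop :=
  ∀ x y, !₂[x, y] ∈ H ↔ |y| ≤ h ∧ |x - c y| ≤ w y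

lemma IsSwept.slice_eq {H : Set E2} {h : ℝ} {c w : ℝ → ℝ} (hH : IsSwept H h c w) {y : ℝ}
    (hy : |y| ≤ h) : slice H y = Icc (c y - w y) (c y + w y) := by
  ext x
  rw [← Real.closedBall_eq_Icc, mem_closedBall, Real.dist_eq]
  exact (hH x y).trans (and_iff_right hy)

lemma IsSwept.slice_eq_empty {H : Set E2} {h : ℝ} {c w : ℝ → ℝ} (hH : IsSwept H h c w) {y : ℝ}
    (hy : ¬ |y| ≤ h) : slice H y = ∅ := by
  ext x
  exact (hH x y).trans (by simp [hy])

/-- Centering all the segments of a swept set preserves its area. -/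
lemma IsSwept.volume_eq {H H' : Set E2} {h : ℝ} {c w : ℝ → ℝ} (hH : IsSwept H h c w)
    (hH' : IsSwept H' h (fun _ => 0) w) (hm : MeasurableSet H) (hm' : MeasurableSet H') :
    volume H' = volume H := by
  rw [volume_eq_lintegral_slice hm, volume_eq_lintegral_slice hm']
  refine lintegral_congr fun y => ?_
  by_cases hy : |y| ≤ h
  · rw [hH.slice_eq hy, hH'.slice_eq hy, Real.volume_Icc, Real.volume_Icc]
    congr 1
    ring
  · rw [hH.slice_eq_empty hy, hH'.slice_eq_empty hy]

/-- Centering all the segments of a swept set strictly increases the interaction, unless almost all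
the centers agree. -/
lemma IsSwept.interaction_lt {k : ℝ → ℝ} (hk : IsProfile k) (hs : StrictAntiOn k (Ioi 0))
    {H H' : Set E2} {h : ℝ} {c w : ℝ → ℝ} (hH : IsSwept H h c w)
    (hH' : IsSwept H' h (fun _ => 0) w) (hm : MeasurableSet H) (hm' : MeasurableSet H')
    (hfin : interaction k H ≠ ⊤) (hw : ∀ y, |y| < h → 0 < w y) {U V : Set ℝ}
    (hU : IsOpen U) (hV : IsOpen V) (hU0 : U.Nonempty) (hV0 : V.Nonempty)
    (hUh : ∀ y ∈ U, |y| < h) (hVh : ∀ y ∈ V, |y| < h)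
    (hUV : ∀ y ∈ U, ∀ y' ∈ V, c y ≠ c y') :
    interaction k H < interaction k H' := by
  rw [hk.interaction_eq_lintegral_slice hm] at hfin ⊢
  rw [hk.interaction_eq_lintegral_slice hm']
  have ne_diag : ∀ᵐ p : ℝ × ℝ, p.1 ≠ p.2 := by
    rw [Measure.volume_eq_prod, Measure.ae_prod_iff_ae_ae]
    · refine Eventually.of_forall fun x => ?_
      have : ∀ᵐ y : ℝ, y ≠ x := by simp [ae_iff]
      filter_upwards [this] with y hy using hy.symm
    · exact (measurableSet_eq_fun measurable_fst measurable_snd).compl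
  have ne_h : ∀ᵐ y : ℝ, |y| ≠ h := by
    have h1 : ∀ᵐ y : ℝ, y ≠ h := by simp [ae_iff]
    have h2 : ∀ᵐ y : ℝ, y ≠ -h := by simp [ae_iff]
    filter_upwards [h1, h2] with y hy1 hy2 hy
    rcases abs_choice y with h' | h'
    · exact hy1 (by rw [← hy, h'])
    · exact hy2 (by rw [← hy, h', neg_neg])
  have ne1 : ∀ᵐ p : ℝ × ℝ, |p.1| ≠ h := Measure.quasiMeasurePreserving_fst.ae ne_h
  have ne2 : ∀ᵐ p : ℝ × ℝ, |p.2| ≠ h := Measure.quasiMeasurePreserving_snd.ae ne_h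
  refine lintegral_strict_mono_of_ae_le_of_ae_lt_on (s := U ×ˢ V)
    (hk.measurable_sliceInteraction hm').aemeasurable hfin ?_ ?_ ?_
  · filter_upwards [ne_diag, ne1, ne2] with p hp hp1 hp2
    unfold sliceInteraction
    by_cases h1 : |p.1| ≤ h
    · by_cases h2 : |p.2| ≤ h
      · rw [hH.slice_eq h1, hH.slice_eq h2, hH'.slice_eq h1, hH'.slice_eq h2]
        exact lintegral_intervals_le hk hs (hw _ (lt_of_le_of_ne h1 hp1))
          (hw _ (lt_of_le_of_ne h2 hp2)) (sub_ne_zero.2 hp)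
      · rw [hH.slice_eq_empty h2, hH'.slice_eq_empty h2]
        simp
    · rw [hH.slice_eq_empty h1, hH'.slice_eq_empty h1]
      simp
  · exact ((hU.prod hV).measure_pos volume (hU0.prod hV0)).ne'
  · refine Eventually.of_forall fun p hp => ?_
    have h1 := hUh _ hp.1
    have h2 := hVh _ hp.2
    have hc := hUV _ hp.1 _ hp.2
    unfold sliceInteraction
    rw [hH.slice_eq h1.le, hH.slice_eq h2.le, hH'.slice_eq h1.le, hH'.slice_eq h2.le]
    exact lintegral_intervals_lt hk hs (hw _ h1) (hw _ h2)
      (sub_ne_zero.2 fun e => hc (by rw [e])) hc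

/-- The centrally symmetric hexagon with vertices `±A`, `±B`, `±C`. -/
def symHex (A B C : E2) : Set E2 := convexHull ℝ {A, B, C, -A, -B, -C}

section symHex

variable {A B C : E2}

lemma isCompact_symHex : IsCompact (symHex A B C) :=
  (Set.toFinite _).isCompact_convexHull ℝ

lemma measurableSet_symHex : MeasurableSet (symHex A B C) := isCompact_symHex.measurableSet

lemma convex_symHex : Convex ℝ (symHex A B C) := convex_convexHull ℝ _

lemma symHex_subset_of_convex {S : Set E2} (hS : Convex ℝ S) (hA : A ∈ S) (hB : B ∈ S)
    (hC : C ∈ S) (hA' : -A ∈ S) (hB' : -B ∈ S) (hC' : -C ∈ S) : symHex A B C ⊆ S := by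
  refine convexHull_min ?_ hS
  simp [insert_subset_iff, *]

lemma vertices_mem_symHex : A ∈ symHex A B C ∧ B ∈ symHex A B C ∧ C ∈ symHex A B C ∧
    -A ∈ symHex A B C ∧ -B ∈ symHex A B C ∧ -C ∈ symHex A B C := by
  refine ⟨?_, ?_, ?_, ?_, ?_, ?_⟩ <;> exact subset_convexHull ℝ _ (by simp)

lemma symHex_subset_closedBall {R : ℝ} (hA : ‖A‖ ≤ R) (hB : ‖B‖ ≤ R) (hC : ‖C‖ ≤ R) :
    symHex A B C ⊆ closedBall 0 R := by
  apply symHex_subset_of_convex (convex_closedBall 0 R) <;> simpa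

lemma neg_mem_symHex {z : E2} (hz : z ∈ symHex A B C) : -z ∈ symHex A B C := by
  have h := vertices_mem_symHex (A := A) (B := B) (C := C)
  have : symHex A B C ⊆ Neg.neg ⁻¹' symHex A B C := by
    apply symHex_subset_of_convex (convex_symHex.neg) <;> simp [h]
  exact this hz

lemma symHex_rotate : symHex B C (-A) = symHex A B C := by
  unfold symHex
  congr 1
  ext z
  simp only [mem_insert_iff, mem_singleton_iff, neg_neg]
  tauto

lemma symHex_swap : symHex C B A = symHex A B C := by
  unfold symHex
  congr 1
  ext z
  simp only [mem_insert_iff, mem_singleton_iff]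
  tauto

lemma symHex_neg_left : symHex (-A) B C = symHex A B C := by
  unfold symHex
  congr 1
  ext z
  simp only [mem_insert_iff, mem_singleton_iff, neg_neg]
  tauto

lemma symHex_neg_mid : symHex A (-B) C = symHex A B C := by
  rw [← symHex_rotate, symHex_neg_left, symHex_rotate]

lemma symHex_neg_right : symHex A B (-C) = symHex A B C := by
  rw [← symHex_swap, symHex_neg_left, symHex_swap]

lemma image_symHex (T : E2 →ₗ[ℝ] E2) : T '' symHex A B C = symHex (T A) (T B) (T C) := by
  unfold symHex
  rw [T.image_convexHull]
  congr 1
  simp [image_insert_eq]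

lemma abs_functional_le_of_mem_symHex {α β γ : ℝ} (hA : |α * A 0 + β * A 1| ≤ γ)
    (hB : |α * B 0 + β * B 1| ≤ γ) (hC : |α * C 0 + β * C 1| ≤ γ) {z : E2}
    (hz : z ∈ symHex A B C) : |α * z 0 + β * z 1| ≤ γ := by
  have hconv : Convex ℝ {z : E2 | |α * z 0 + β * z 1| ≤ γ} := by
    intro x hx y hy s t hs ht hst
    simp only [mem_ofPred_eq, abs_le, PiLp.add_apply, PiLp.smul_apply, smul_eq_mul] at hx hy ⊢
    constructor <;> nlinarith
  have hneg (v : E2) (h : |α * v 0 + β * v 1| ≤ γ) : |α * (-v) 0 + β * (-v) 1| ≤ γ := by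
    rw [← abs_neg]
    convert h using 2
    simp only [PiLp.neg_apply]
    ring
  exact symHex_subset_of_convex hconv hA hB hC (hneg A hA) (hneg B hB) (hneg C hC) hz

end symHex

/-- The center of the horizontal chord at height `y` of the hexagon with vertices
`±(m + l, h₁)`, `±(b, h₂)`, `±(m - l, h₁)`. -/
def chordCenter (m b h₁ h₂ y : ℝ) : ℝ :=
  if |y| ≤ h₁ then m * y / h₁
  else if 0 ≤ y then m + (b - m) * (y - h₁) / (h₂ - h₁) else -(m + (b - m) * (-y - h₁) / (h₂ - h₁))

/-- The half-length of the horizontal chord at height `y` of the hexagon with vertices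
`±(m + l, h₁)`, `±(b, h₂)`, `±(m - l, h₁)`. -/
def chordHalfLength (l h₁ h₂ y : ℝ) : ℝ :=
  if |y| ≤ h₁ then l else l * (h₂ - |y|) / (h₂ - h₁)

lemma chordCenter_neg {m b h₁ h₂ y : ℝ} (hh : 0 < h₁) :
    chordCenter m b h₁ h₂ (-y) = -chordCenter m b h₁ h₂ y := by
  unfold chordCenter
  simp only [abs_neg]
  split_ifs with h1 h2 h3 h3
  · ring
  · exfalso
    apply h1
    rw [show y = 0 by linarith, abs_zero]
    exact hh.le
  · ring_nf
  · ring_nf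
  · linarith

section

variable {m b l h₁ h₂ : ℝ}

lemma mem_symHex_of_chord (hl : 0 < l) (hh : 0 < h₁) {x y : ℝ} (hy0 : 0 ≤ y) (hy : y ≤ h₂)
    (hx : |x - chordCenter m b h₁ h₂ y| ≤ chordHalfLength l h₁ h₂ y) :
    !₂[x, y] ∈ symHex !₂[m + l, h₁] !₂[b, h₂] !₂[m - l, h₁] := by
  have hconv := convex_symHex (A := !₂[m + l, h₁]) (B := !₂[b, h₂]) (C := !₂[m - l, h₁])
  obtain ⟨hA, hB, hC, hA', hB', hC'⟩ :=
    vertices_mem_symHex (A := !₂[m + l, h₁]) (B := !₂[b, h₂]) (C := !₂[m - l, h₁])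
  unfold chordCenter chordHalfLength at hx
  rw [abs_of_nonneg hy0] at hx
  by_cases hyh : y ≤ h₁
  · rw [if_pos hyh, if_pos hyh, abs_le] at hx
    set μ := (1 + (x - m * y / h₁) / l) / 2 with hμ
    set ν := (1 + y / h₁) / 2 with hν
    have hxl : -1 ≤ (x - m * y / h₁) / l ∧ (x - m * y / h₁) / l ≤ 1 := by
      rw [le_div_iff₀ hl, div_le_iff₀ hl]
      constructor <;> linarith
    have hyl : 0 ≤ y / h₁ ∧ y / h₁ ≤ 1 := ⟨by positivity, (div_le_one hh).2 hyh⟩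
    have hμ0 : 0 ≤ μ := by linarith
    have hμ1 : 0 ≤ 1 - μ := by linarith
    have hν0 : 0 ≤ ν := by linarith
    have hν1 : 0 ≤ 1 - ν := by linarith
    have h1 := hconv hA hC hμ0 hμ1 (by ring)
    have h2 := hconv hC' hA' hμ0 hμ1 (by ring)
    have h3 := hconv h1 h2 hν0 hν1 (by ring)
    convert h3 using 1
    have hμl : (2 * μ - 1) * l = x - m * y / h₁ := by
      rw [hμ]
      field_simp
      ring
    have hνh : (2 * ν - 1) * h₁ = y := by
      rw [hν]
      field_simp
      ring
    have hmy : m * y / h₁ = m * (2 * ν - 1) := by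
      rw [hν]
      field_simp
      ring
    ext i
    fin_cases i
    · simp
      linear_combination -hμl - hmy
    · simp
      linear_combination -hνh
  · rw [if_neg hyh, if_neg hyh, if_pos hy0] at hx
    push Not at hyh
    have hδ : 0 < h₂ - h₁ := by linarith
    rcases eq_or_lt_of_le hy with rfl | hy2
    · rw [sub_self, mul_zero, zero_div, mul_div_cancel_right₀ _ hδ.ne'] at hx
      have := abs_nonpos_iff.1 hx
      rw [show x = b by linarith]
      exact hB
    · set θ := (y - h₁) / (h₂ - h₁) with hθ
      have hθ0 : 0 ≤ θ := div_nonneg (by linarith) hδ.le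
      have hθ1 : 0 < 1 - θ := by
        have : θ < 1 := (div_lt_one hδ).2 (by linarith)
        linarith
      have hθe : θ * (h₂ - h₁) = y - h₁ := div_mul_cancel₀ _ hδ.ne'
      have e1 : (b - m) * (y - h₁) / (h₂ - h₁) = (b - m) * θ := by rw [hθ]; ring
      have e2 : l * (h₂ - y) / (h₂ - h₁) = l * (1 - θ) := by
        rw [hθ]
        field_simp
        ring
      rw [e1, e2, abs_le] at hx
      have hw : 0 < l * (1 - θ) := by positivity
      set μ := (1 + (x - (m + (b - m) * θ)) / (l * (1 - θ))) / 2 with hμ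
      have hxl : -1 ≤ (x - (m + (b - m) * θ)) / (l * (1 - θ)) ∧
          (x - (m + (b - m) * θ)) / (l * (1 - θ)) ≤ 1 := by
        rw [le_div_iff₀ hw, div_le_iff₀ hw]
        constructor <;> linarith
      have hμ0 : 0 ≤ μ := by linarith
      have hμ1 : 0 ≤ 1 - μ := by linarith
      have h1 := hconv hA hC hμ0 hμ1 (by ring)
      have h3 := hconv hB h1 hθ0 hθ1.le (by ring)
      convert h3 using 1
      have hμl : (2 * μ - 1) * (l * (1 - θ)) = x - (m + (b - m) * θ) := by
        rw [hμ]
        field_simp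
        ring
      ext i
      fin_cases i
      · simp
        linear_combination -hμl
      · simp
        linear_combination -hθe

lemma chord_of_mem_symHex (hl : 0 < l) (hh : 0 < h₁) (hle : h₁ ≤ h₂)
    (hb : |h₁ * b - m * h₂| ≤ h₁ * l) {x y : ℝ} (hy0 : 0 ≤ y)
    (hxy : !₂[x, y] ∈ symHex !₂[m + l, h₁] !₂[b, h₂] !₂[m - l, h₁]) :
    y ≤ h₂ ∧ |x - chordCenter m b h₁ h₂ y| ≤ chordHalfLength l h₁ h₂ y := by
  have hhl : 0 < h₁ * l := by positivity
  have strip0 := abs_functional_le_of_mem_symHex (α := 0) (β := 1) (γ := h₂)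
    (by simp [abs_of_pos hh, hle]) (by simp [abs_of_pos (hh.trans_le hle)])
    (by simp [abs_of_pos hh, hle]) hxy
  have strip3 := abs_functional_le_of_mem_symHex (α := h₁) (β := -m) (γ := h₁ * l)
    (by
      simp only [Matrix.cons_val_zero, Matrix.cons_val_one]
      rw [show h₁ * (m + l) + -m * h₁ = h₁ * l by ring, abs_of_pos hhl])
    (by simpa [sub_eq_add_neg] using hb)
    (by
      simp only [Matrix.cons_val_zero, Matrix.cons_val_one]
      rw [show h₁ * (m - l) + -m * h₁ = -(h₁ * l) by ring, abs_neg, abs_of_pos hhl]) hxy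
  rw [abs_le] at hb
  have strip1 := abs_functional_le_of_mem_symHex (α := h₂ - h₁) (β := -(b - m - l))
    (γ := (h₂ - h₁) * (m + l) - (b - m - l) * h₁)
    (by
      simp only [Matrix.cons_val_zero, Matrix.cons_val_one]
      rw [abs_le]
      constructor <;> nlinarith)
    (by
      simp only [Matrix.cons_val_zero, Matrix.cons_val_one]
      rw [abs_le]
      constructor <;> nlinarith)
    (by
      simp only [Matrix.cons_val_zero, Matrix.cons_val_one]
      rw [abs_le]
      constructor <;> nlinarith) hxy
  have strip2 := abs_functional_le_of_mem_symHex (α := h₂ - h₁) (β := -(b - m + l))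
    (γ := -((h₂ - h₁) * (m - l) - (b - m + l) * h₁))
    (by
      simp only [Matrix.cons_val_zero, Matrix.cons_val_one]
      rw [abs_le]
      constructor <;> nlinarith)
    (by
      simp only [Matrix.cons_val_zero, Matrix.cons_val_one]
      rw [abs_le]
      constructor <;> nlinarith)
    (by
      simp only [Matrix.cons_val_zero, Matrix.cons_val_one]
      rw [abs_le]
      constructor <;> nlinarith) hxy
  simp only [Matrix.cons_val_zero, Matrix.cons_val_one, abs_le]
    at strip0 strip1 strip2 strip3
  refine ⟨by linarith, ?_⟩
  unfold chordCenter chordHalfLength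
  rw [abs_of_nonneg hy0]
  by_cases hyh : y ≤ h₁
  · rw [if_pos hyh, if_pos hyh, abs_le]
    have e : h₁ * (x - m * y / h₁) = h₁ * x - m * y := by field_simp
    constructor
    · refine le_of_mul_le_mul_left ?_ hh
      linarith
    · refine le_of_mul_le_mul_left ?_ hh
      linarith
  · rw [if_neg hyh, if_neg hyh, if_pos hy0, abs_le]
    push Not at hyh
    have hδ : 0 < h₂ - h₁ := by linarith
    have e1 : (h₂ - h₁) * (x - (m + (b - m) * (y - h₁) / (h₂ - h₁))) =
        (h₂ - h₁) * (x - m) - (b - m) * (y - h₁) := by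
      field_simp
      ring
    have e2 : (h₂ - h₁) * (l * (h₂ - y) / (h₂ - h₁)) = l * (h₂ - y) := by field_simp
    constructor
    · refine le_of_mul_le_mul_left ?_ hδ
      linarith
    · refine le_of_mul_le_mul_left ?_ hδ
      linarith

lemma isSwept_symHex (hl : 0 < l) (hh : 0 < h₁) (hle : h₁ ≤ h₂)
    (hb : |h₁ * b - m * h₂| ≤ h₁ * l) :
    IsSwept (symHex !₂[m + l, h₁] !₂[b, h₂] !₂[m - l, h₁]) h₂ (chordCenter m b h₁ h₂)
      (chordHalfLength l h₁ h₂) := by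
  have key : ∀ x y : ℝ, 0 ≤ y →
      (!₂[x, y] ∈ symHex !₂[m + l, h₁] !₂[b, h₂] !₂[m - l, h₁] ↔
      |y| ≤ h₂ ∧ |x - chordCenter m b h₁ h₂ y| ≤ chordHalfLength l h₁ h₂ y) := by
    intro x y hy
    rw [abs_of_nonneg hy]
    exact ⟨chord_of_mem_symHex hl hh hle hb hy, fun h => mem_symHex_of_chord hl hh hy h.1 h.2⟩
  intro x y
  rcases le_total 0 y with hy | hy
  · exact key x y hy
  · have e : (!₂[x, y] : E2) = -!₂[-x, -y] := by
      ext i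
      fin_cases i <;> simp
    have h1 : !₂[x, y] ∈ symHex !₂[m + l, h₁] !₂[b, h₂] !₂[m - l, h₁] ↔
        !₂[-x, -y] ∈ symHex !₂[m + l, h₁] !₂[b, h₂] !₂[m - l, h₁] := by
      constructor
      · intro h
        rw [e] at h
        simpa using neg_mem_symHex h
      · intro h
        rw [e]
        exact neg_mem_symHex h
    rw [h1, key (-x) (-y) (by linarith), chordCenter_neg hh, abs_neg,
      show -x - -chordCenter m b h₁ h₂ y = -(x - chordCenter m b h₁ h₂ y) by ring, abs_neg]
    unfold chordHalfLength
    rw [abs_neg]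

/-- Steiner symmetrization of a hexagon along a short diagonal preserves its area and strictly
increases the interaction, unless the hexagon is already symmetric. -/
lemma steiner_symHex {k : ℝ → ℝ} (hk : IsProfile k) (hs : StrictAntiOn k (Ioi 0)) (hl : 0 < l)
    (hh : 0 < h₁) (hle : h₁ ≤ h₂) (hb : |h₁ * b - m * h₂| ≤ h₁ * l)
    (hne : m ≠ 0 ∨ (h₁ < h₂ ∧ b ≠ 0)) :
    volume (symHex !₂[l, h₁] !₂[0, h₂] !₂[-l, h₁]) =
      volume (symHex !₂[m + l, h₁] !₂[b, h₂] !₂[m - l, h₁]) ∧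
    interaction k (symHex !₂[m + l, h₁] !₂[b, h₂] !₂[m - l, h₁]) <
      interaction k (symHex !₂[l, h₁] !₂[0, h₂] !₂[-l, h₁]) := by
  have hS := isSwept_symHex hl hh hle hb
  have hS' : IsSwept (symHex !₂[l, h₁] !₂[0, h₂] !₂[-l, h₁]) h₂ (fun _ => 0)
      (chordHalfLength l h₁ h₂) := by
    have := isSwept_symHex (m := 0) (b := 0) hl hh hle (by simp; positivity)
    have e : chordCenter 0 0 h₁ h₂ = fun _ => 0 := by
      funext y
      simp [chordCenter]
    rwa [e, zero_add, zero_sub] at this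
  refine ⟨hS.volume_eq hS' measurableSet_symHex measurableSet_symHex, ?_⟩
  obtain ⟨R, hR⟩ := (isCompact_symHex (A := !₂[m + l, h₁]) (B := !₂[b, h₂])
    (C := !₂[m - l, h₁])).isBounded.subset_closedBall 0
  have hfin := (hk.interaction_lt_top hR measurableSet_symHex).ne
  have hw : ∀ y, |y| < h₂ → 0 < chordHalfLength l h₁ h₂ y := by
    intro y hy
    unfold chordHalfLength
    split_ifs with h
    · exact hl
    · push Not at h
      exact div_pos (mul_pos hl (by linarith)) (by linarith)
  have mid : ∀ y, |y| ≤ h₁ → chordCenter m b h₁ h₂ y = m * y / h₁ := fun y hy => if_pos hy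
  by_cases hm : m = 0
  · obtain ⟨h12, hb0⟩ := hne.resolve_left (not_not.2 hm)
    refine hS.interaction_lt hk hs hS' measurableSet_symHex measurableSet_symHex hfin hw
      (U := Ioo h₁ h₂) (V := Ioo 0 h₁) isOpen_Ioo isOpen_Ioo (nonempty_Ioo.2 h12)
      (nonempty_Ioo.2 hh) ?_ ?_ ?_
    · intro y hy
      rw [abs_of_pos (hh.trans hy.1)]
      exact hy.2
    · intro y hy
      rw [abs_of_pos hy.1]
      exact hy.2.trans h12
    · intro y hy y' hy'
      rw [mid y' (by rw [abs_of_pos hy'.1]; exact hy'.2.le)]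
      have hy0 := hh.trans hy.1
      unfold chordCenter
      rw [abs_of_pos hy0, if_neg (not_le.2 hy.1), if_pos hy0.le, hm]
      simp only [zero_mul, zero_div, zero_add, sub_zero]
      exact (div_ne_zero (mul_ne_zero hb0 (sub_ne_zero.2 hy.1.ne')) (sub_ne_zero.2 h12.ne'))
  · refine hS.interaction_lt hk hs hS' measurableSet_symHex measurableSet_symHex hfin hw
      (U := Ioo 0 h₁) (V := Ioo (-h₁) 0) isOpen_Ioo isOpen_Ioo (nonempty_Ioo.2 hh)
      (nonempty_Ioo.2 (by linarith)) ?_ ?_ ?_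
    · intro y hy
      rw [abs_of_pos hy.1]
      exact hy.2.trans_le hle
    · intro y hy
      rw [abs_of_neg hy.2]
      linarith [hy.1]
    · intro y hy y' hy'
      rw [mid y (by rw [abs_of_pos hy.1]; exact hy.2.le),
        mid y' (by rw [abs_of_neg hy'.2]; linarith [hy'.1])]
      intro e
      rw [div_left_inj' hh.ne'] at e
      have := mul_left_cancel₀ hm e
      linarith [hy.1, hy'.2]

end

lemma norm_sq_plane (z : E2) : ‖z‖ ^ 2 = z 0 ^ 2 + z 1 ^ 2 := by
  rw [EuclideanSpace.real_norm_sq_eq, Fin.sum_univ_two]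

lemma norm_le_iff_plane {z : E2} {R : ℝ} (hR : 0 ≤ R) :
    ‖z‖ ≤ R ↔ z 0 ^ 2 + z 1 ^ 2 ≤ R ^ 2 := by
  rw [← norm_sq_plane, sq_le_sq₀ (norm_nonneg _) hR]

lemma exists_rotation {u v : ℝ} (huv : u ^ 2 + v ^ 2 = 1) :
    ∃ T : E2 ≃ₗᵢ[ℝ] E2, ∀ z, T z = !₂[u * z 0 + v * z 1, u * z 1 - v * z 0] := by
  let L : E2 →ₗ[ℝ] E2 :=
    { toFun := fun z => !₂[u * z 0 + v * z 1, u * z 1 - v * z 0]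
      map_add' := fun x y => by
        ext i
        fin_cases i <;> simp <;> ring
      map_smul' := fun c x => by
        ext i
        fin_cases i <;> simp <;> ring }
  have hL : ∀ z, ‖L z‖ = ‖z‖ := fun z => by
    rw [← sq_eq_sq₀ (norm_nonneg _) (norm_nonneg _), norm_sq_plane, norm_sq_plane]
    simp only [L, LinearMap.coe_mk, AddHom.coe_mk, Matrix.cons_val_zero, Matrix.cons_val_one]
    linear_combination (z 0 ^ 2 + z 1 ^ 2) * huv
  exact ⟨LinearIsometry.toLinearIsometryEquiv ⟨L, hL⟩ rfl, fun z => rfl⟩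

/-- `A, B, C, -A, -B, -C` are the vertices, in counterclockwise order, of a convex hexagon; three
consecutive vertices may be aligned, but no two vertices may be opposite or equal. -/
structure HexPosition (A B C : E2) : Prop where
  ab : 0 < det2 A B
  bc : 0 < det2 B C
  ac : 0 < det2 A C
  leB : det2 A C ≤ det2 A B + det2 B C
  leC : det2 A B ≤ det2 B C + det2 A C
  leA : det2 B C ≤ det2 A B + det2 A C

lemma det2_neg_right (A B : E2) : det2 A (-B) = -det2 A B := by
  simp [det2]
  ring

lemma det2_neg_left (A B : E2) : det2 (-A) B = -det2 A B := by
  simp [det2]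
  ring

lemma det2_swap (A B : E2) : det2 B A = -det2 A B := by
  simp [det2]
  ring

/-- The linear relation between three vectors of the plane. -/
lemma det2_relation (A B C : E2) (i : Fin 2) :
    det2 A C * B i = det2 A B * C i + det2 B C * A i := by
  fin_cases i <;> simp [det2] <;> ring

lemma HexPosition.rotate {A B C : E2} (h : HexPosition A B C) : HexPosition B C (-A) := by
  obtain ⟨h1, h2, h3, h4, h5, h6⟩ := h
  have e1 : det2 C (-A) = det2 A C := by rw [det2_neg_right, det2_swap, neg_neg]
  have e2 : det2 B (-A) = det2 A B := by rw [det2_neg_right, det2_swap, neg_neg]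
  constructor <;> (try rw [e1]) <;> (try rw [e2]) <;> linarith

lemma HexPosition.exists_steiner {k : ℝ → ℝ} (hk : IsProfile k) (hs : StrictAntiOn k (Ioi 0))
    {A B C : E2} (h : HexPosition A B C) {R : ℝ} (hA : ‖A‖ ≤ R) (hB : ‖B‖ ≤ R) (hC : ‖C‖ ≤ R)
    (hne : A 0 ^ 2 + A 1 ^ 2 ≠ C 0 ^ 2 + C 1 ^ 2 ∨ (det2 A C < det2 A B + det2 B C ∧
      B 0 * (A 0 - C 0) + B 1 * (A 1 - C 1) ≠ 0)) :
    ∃ A' B' C' : E2, ‖A'‖ ≤ R ∧ ‖B'‖ ≤ R ∧ ‖C'‖ ≤ R ∧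
      volume (symHex A' B' C') = volume (symHex A B C) ∧
      interaction k (symHex A B C) < interaction k (symHex A' B' C') := by
  have hR : 0 ≤ R := (norm_nonneg _).trans hA
  set s₀ := A 0 - C 0 with hs0
  set s₁ := A 1 - C 1 with hs1
  set σ := √(s₀ ^ 2 + s₁ ^ 2) with hσ
  have hσ2 : σ ^ 2 = s₀ ^ 2 + s₁ ^ 2 := Real.sq_sqrt (by positivity)
  have hσ0 : 0 < σ := by
    refine Real.sqrt_pos.2 (lt_of_le_of_ne (by positivity) fun e => ?_)
    have e0 : s₀ = 0 := by nlinarith [sq_nonneg s₀, sq_nonneg s₁]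
    have e1 : s₁ = 0 := by nlinarith [sq_nonneg s₀, sq_nonneg s₁]
    have := h.ac
    rw [det2, show A 0 = C 0 by linarith, show A 1 = C 1 by linarith] at this
    linarith
  obtain ⟨T, hT⟩ := exists_rotation (u := s₀ / σ) (v := s₁ / σ) (by
    rw [div_pow, div_pow, ← add_div, ← hσ2, div_self (by positivity)])
  set l := σ / 2 with hl
  set m := (s₀ * (A 0 + C 0) + s₁ * (A 1 + C 1)) / (2 * σ) with hm
  set h₁ := det2 A C / σ with hh1
  set h₂ := (det2 A B + det2 B C) / σ with hh2
  set b := (B 0 * s₀ + B 1 * s₁) / σ with hb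
  have hTA : T A = !₂[m + l, h₁] := by
    rw [hT]
    congr 2
    · rw [hm, hl]
      field_simp
      linear_combination -hσ2 + s₀ * hs0 + s₁ * hs1
    · congr 1
      rw [hh1, det2]
      field_simp
      rw [hs0, hs1]
      ring
  have hTC : T C = !₂[m - l, h₁] := by
    rw [hT]
    congr 2
    · rw [hm, hl]
      field_simp
      linear_combination hσ2 - s₀ * hs0 - s₁ * hs1
    · congr 1
      rw [hh1, det2]
      field_simp
      rw [hs0, hs1]
      ring
  have hTB : T B = !₂[b, h₂] := by
    rw [hT]
    congr 2
    · rw [hb]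
      ring
    · congr 1
      rw [hh2, det2, det2]
      field_simp
      rw [hs0, hs1]
      ring
  have himg : T '' symHex A B C = symHex !₂[m + l, h₁] !₂[b, h₂] !₂[m - l, h₁] := by
    rw [← hTA, ← hTB, ← hTC]
    exact image_symHex T.toLinearEquiv.toLinearMap
  have hvol : volume (symHex !₂[m + l, h₁] !₂[b, h₂] !₂[m - l, h₁]) = volume (symHex A B C) := by
    rw [← himg]
    exact volume_image_affineIsometry T.toAffineIsometryEquiv _
  have hint : interaction k (symHex !₂[m + l, h₁] !₂[b, h₂] !₂[m - l, h₁]) =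
      interaction k (symHex A B C) := by
    rw [← himg]
    exact interaction_image k T.toAffineIsometryEquiv _
  have hl0 : 0 < l := by positivity
  have hh0 : 0 < h₁ := div_pos h.ac hσ0
  have hle : h₁ ≤ h₂ := div_le_div_of_nonneg_right h.leB hσ0.le
  have hbl : |h₁ * b - m * h₂| ≤ h₁ * l := by
    have r0 := det2_relation A B C 0
    have r1 := det2_relation A B C 1
    have e : h₁ * b - m * h₂ = (det2 B C - det2 A B) / 2 := by
      rw [hh1, hb, hm, hh2]
      field_simp
      linear_combination 2 * s₀ * r0 + 2 * s₁ * r1 + (det2 A B - det2 B C) * hσ2 +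
        (det2 B C - det2 A B) * s₀ * hs0 + (det2 B C - det2 A B) * s₁ * hs1
    have e2 : h₁ * l = det2 A C / 2 := by
      rw [hh1, hl]
      field_simp
    rw [e, e2, abs_le]
    constructor <;> linarith [h.leC, h.leA]
  have hne' : m ≠ 0 ∨ (h₁ < h₂ ∧ b ≠ 0) := by
    refine hne.imp (fun h0 e => h0 ?_) fun h0 => ⟨div_lt_div_of_pos_right h0.1 hσ0,
      div_ne_zero h0.2 hσ0.ne'⟩
    rw [hm, div_eq_zero_iff] at e
    have := e.resolve_right (by positivity)
    rw [hs0, hs1] at this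
    linarith
  obtain ⟨hv, hi⟩ := steiner_symHex hk hs hl0 hh0 hle hbl hne'
  have nA := (norm_le_iff_plane hR).1 ((T.norm_map A).trans_le hA)
  have nB := (norm_le_iff_plane hR).1 ((T.norm_map B).trans_le hB)
  have nC := (norm_le_iff_plane hR).1 ((T.norm_map C).trans_le hC)
  rw [hTA] at nA
  rw [hTB] at nB
  rw [hTC] at nC
  simp only [Matrix.cons_val_zero, Matrix.cons_val_one] at nA nB nC
  have hlR : l ^ 2 + h₁ ^ 2 ≤ R ^ 2 := by
    rcases le_total 0 m with h0 | h0 <;> nlinarith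
  refine ⟨!₂[l, h₁], !₂[0, h₂], !₂[-l, h₁], ?_, ?_, ?_, hv.trans hvol, hint ▸ hi⟩ <;>
    rw [norm_le_iff_plane hR] <;> simp only [Matrix.cons_val_zero, Matrix.cons_val_one] <;>
    nlinarith [sq_nonneg b]

lemma smul_add_smul_mem_symHex {A B C : E2} {s t : ℝ} (hs : 0 ≤ s) (ht : 0 ≤ t)
    (hst : s + t ≤ 1) : s • A + t • C ∈ symHex A B C := by
  obtain ⟨hA, -, hC, hA', -, -⟩ := vertices_mem_symHex (A := A) (B := B) (C := C)
  have h0 : (0 : E2) ∈ symHex A B C := by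
    have := convex_symHex hA hA' (a := 1 / 2) (b := 1 / 2) (by norm_num) (by norm_num) (by norm_num)
    simpa using this
  rcases (add_nonneg hs ht).eq_or_lt with h | h
  · rw [show s = 0 by linarith, show t = 0 by linarith]
    simpa using h0
  · have h1 := convex_symHex hA hC (a := s / (s + t)) (b := t / (s + t)) (by positivity)
      (by positivity) (by field_simp)
    have h2 := convex_symHex.smul_mem_of_zero_mem h0 h1 (t := s + t) ⟨h.le, hst⟩
    rwa [smul_add, smul_smul, smul_smul, mul_div_cancel₀ _ h.ne', mul_div_cancel₀ _ h.ne'] at h2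

lemma HexPosition.of_midpoint {A C : E2} (h : 0 < det2 A C) :
    HexPosition A ((1 / 2 : ℝ) • A + (1 / 2 : ℝ) • C) C := by
  have e1 : det2 A ((1 / 2 : ℝ) • A + (1 / 2 : ℝ) • C) = det2 A C / 2 := by
    simp [det2]
    ring
  have e2 : det2 ((1 / 2 : ℝ) • A + (1 / 2 : ℝ) • C) C = det2 A C / 2 := by
    simp [det2]
    ring
  constructor <;> (try rw [e1]) <;> (try rw [e2]) <;> linarith

lemma exists_hexPosition_of_collapse {A B C : E2} (ha : 0 ≤ det2 A B) (hb : 0 ≤ det2 B C)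
    (hc : 0 < det2 A C) (h : det2 A B + det2 B C ≤ det2 A C) :
    ∃ A' B' C' : E2, HexPosition A' B' C' ∧ symHex A' B' C' = symHex A B C := by
  refine ⟨A, _, C, HexPosition.of_midpoint hc, ?_⟩
  have hB : B = (det2 B C / det2 A C) • A + (det2 A B / det2 A C) • C := by
    ext i
    have := det2_relation A B C i
    simp only [PiLp.add_apply, PiLp.smul_apply, smul_eq_mul]
    field_simp
    linarith
  have key (X : E2) : B ∈ symHex A X C := by
    rw [hB]
    refine smul_add_smul_mem_symHex (by positivity) (by positivity) ?_
    rw [← add_div, div_le_one hc]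
    linarith
  have key' : (1 / 2 : ℝ) • A + (1 / 2 : ℝ) • C ∈ symHex A B C :=
    smul_add_smul_mem_symHex (by norm_num) (by norm_num) (by norm_num)
  apply Subset.antisymm
  · obtain ⟨hA, hB, hC, hA', hB', hC'⟩ := vertices_mem_symHex (A := A) (B := B) (C := C)
    exact symHex_subset_of_convex convex_symHex hA key' hC hA' (neg_mem_symHex key') hC'
  · obtain ⟨hA, -, hC, hA', -, hC'⟩ := vertices_mem_symHex (A := A)
      (B := (1 / 2 : ℝ) • A + (1 / 2 : ℝ) • C) (C := C)
    exact symHex_subset_of_convex convex_symHex hA (key _) hC hA' (neg_mem_symHex (key _)) hC'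

lemma exists_hexPosition_of_nonneg {A B C : E2} (ha : 0 ≤ det2 A B) (hb : 0 ≤ det2 B C)
    (hc : 0 ≤ det2 A C) (h : 0 < det2 A B ∨ 0 < det2 B C ∨ 0 < det2 A C) :
    ∃ A' B' C' : E2, HexPosition A' B' C' ∧ symHex A' B' C' = symHex A B C := by
  have e1 : det2 C (-A) = det2 A C := by rw [det2_neg_right, det2_swap, neg_neg]
  have e2 : det2 B (-A) = det2 A B := by rw [det2_neg_right, det2_swap, neg_neg]
  have e3 : det2 C (-B) = det2 B C := by rw [det2_neg_right, det2_swap, neg_neg]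
  have e4 : det2 (-A) (-B) = det2 A B := by rw [det2_neg_right, det2_neg_left, neg_neg]
  by_cases h1 : det2 A B + det2 B C ≤ det2 A C
  · exact exists_hexPosition_of_collapse ha hb (by rcases h with h | h | h <;> linarith) h1
  by_cases h2 : det2 B C + det2 A C ≤ det2 A B
  · rw [← symHex_rotate]
    apply exists_hexPosition_of_collapse <;> (try rw [e1]) <;> (try rw [e2]) <;>
      rcases h with h | h | h <;> linarith
  by_cases h3 : det2 A C + det2 A B ≤ det2 B C
  · rw [← symHex_rotate, ← symHex_rotate]
    apply exists_hexPosition_of_collapse <;> (try rw [e1]) <;> (try rw [e3]) <;> (try rw [e4]) <;>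
      rcases h with h | h | h <;> linarith
  · refine ⟨A, B, C, ?_, rfl⟩
    constructor <;> linarith

set_option linter.unusedSimpArgs false in
lemma exists_hexPosition {A B C : E2} (h : det2 A B ≠ 0 ∨ det2 B C ≠ 0 ∨ det2 A C ≠ 0) :
    ∃ A' B' C' : E2, HexPosition A' B' C' ∧ symHex A' B' C' = symHex A B C := by
  have key (A' B' C' : E2) (hS : symHex A' B' C' = symHex A B C) (ha : det2 A' B' = |det2 A B| ∨
      det2 A' B' = |det2 B C|) (hb : det2 B' C' = |det2 B C| ∨ det2 B' C' = |det2 A B|)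
      (hab : det2 A' B' + det2 B' C' = |det2 A B| + |det2 B C|)
      (hc : det2 A' C' = |det2 A C|) :
      ∃ A' B' C' : E2, HexPosition A' B' C' ∧ symHex A' B' C' = symHex A B C := by
    rw [← hS]
    have h1 := abs_nonneg (det2 A B)
    have h2 := abs_nonneg (det2 B C)
    have h3 := abs_nonneg (det2 A C)
    have ha0 : 0 ≤ det2 A' B' := by rcases ha with ha | ha <;> linarith
    have hb0 : 0 ≤ det2 B' C' := by rcases hb with hb | hb <;> linarith
    refine exists_hexPosition_of_nonneg ha0 hb0 (by linarith) ?_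
    by_contra! hcon
    rw [← abs_pos, ← abs_pos, ← abs_pos] at h
    rcases h with h | h | h <;> linarith
  have s1 := det2_swap A B
  have s2 := det2_swap B C
  have s3 := det2_swap A C
  rcases le_total 0 (det2 A B) with ha | ha <;> rcases le_total 0 (det2 B C) with hb | hb <;>
    rcases le_total 0 (det2 A C) with hc | hc <;>
    simp only [abs_of_nonneg, abs_of_nonpos, ha, hb, hc] at key
  · exact key A B C rfl (by simp) (by simp) (by simp) (by simp)
  · refine key C (-B) A (by rw [symHex_neg_mid, symHex_swap]) ?_ ?_ ?_ ?_ <;>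
      simp only [det2_neg_left, det2_neg_right, neg_neg, s1, s2, s3, true_or, or_true, add_comm]
  · refine key C B (-A) (by rw [symHex_neg_right, symHex_swap]) ?_ ?_ ?_ ?_ <;>
      simp only [det2_neg_left, det2_neg_right, neg_neg, s1, s2, s3, true_or, or_true, add_comm]
  · refine key A B (-C) (by rw [symHex_neg_right]) ?_ ?_ ?_ ?_ <;>
      simp only [det2_neg_left, det2_neg_right, neg_neg, s1, s2, s3, true_or, or_true, add_comm]
  · refine key (-C) B A (by rw [symHex_neg_left, symHex_swap]) ?_ ?_ ?_ ?_ <;>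
      simp only [det2_neg_left, det2_neg_right, neg_neg, s1, s2, s3, true_or, or_true, add_comm]
  · refine key (-A) B C (by rw [symHex_neg_left]) ?_ ?_ ?_ ?_ <;>
      simp only [det2_neg_left, det2_neg_right, neg_neg, s1, s2, s3, true_or, or_true, add_comm]
  · refine key A (-B) C (by rw [symHex_neg_mid]) ?_ ?_ ?_ ?_ <;>
      simp only [det2_neg_left, det2_neg_right, neg_neg, s1, s2, s3, true_or, or_true, add_comm]
  · refine key C B A (by rw [symHex_swap]) ?_ ?_ ?_ ?_ <;>
      simp only [det2_neg_left, det2_neg_right, neg_neg, s1, s2, s3, true_or, or_true, add_comm]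

lemma volume_eq_zero_of_functional {S : Set E2} {α β : ℝ} (hαβ : α ≠ 0 ∨ β ≠ 0)
    (hS : ∀ z ∈ S, α * z 0 + β * z 1 = 0) : volume S = 0 := by
  let L : E2 →ₗ[ℝ] ℝ :=
    { toFun := fun z => α * z 0 + β * z 1
      map_add' := fun x y => by
        simp
        ring
      map_smul' := fun c x => by
        simp
        ring }
  have hker : LinearMap.ker L ≠ ⊤ := by
    intro h
    have h0 : L !₂[α, β] = 0 := by
      rw [← LinearMap.mem_ker, h]
      trivial
    have h1 : α * α + β * β = 0 := by simpa [L] using h0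
    rcases hαβ with h | h <;> apply h <;> nlinarith
  exact measure_mono_null (fun z hz => hS z hz) (Measure.addHaar_submodule volume _ hker)

lemma volume_symHex_eq_zero {A B C : E2} (hab : det2 A B = 0) (hbc : det2 B C = 0)
    (hac : det2 A C = 0) : volume (symHex A B C) = 0 := by
  have hba : det2 B A = 0 := by rw [det2_swap, hab, neg_zero]
  have hca : det2 C A = 0 := by rw [det2_swap, hac, neg_zero]
  have hcb : det2 C B = 0 := by rw [det2_swap, hbc, neg_zero]
  have key (P : E2) (hA : det2 P A = 0) (hB : det2 P B = 0) (hC : det2 P C = 0)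
      (hP : ¬ (P 0 = 0 ∧ P 1 = 0)) : volume (symHex A B C) = 0 := by
    refine volume_eq_zero_of_functional (α := -P 1) (β := P 0) ?_ fun z hz => ?_
    · rw [neg_ne_zero]
      tauto
    · have := abs_functional_le_of_mem_symHex (α := -P 1) (β := P 0) (γ := 0) (A := A) (B := B)
        (C := C) ?_ ?_ ?_ hz
      · simpa using this
      all_goals
        rw [abs_nonpos_iff]
        simp only [det2] at hA hB hC
        linarith
  have hself (P : E2) : det2 P P = 0 := by
    rw [det2]
    ring
  by_cases hA : A 0 = 0 ∧ A 1 = 0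
  · by_cases hB : B 0 = 0 ∧ B 1 = 0
    · by_cases hC : C 0 = 0 ∧ C 1 = 0
      · refine volume_eq_zero_of_functional (α := 1) (β := 0) (by simp) fun z hz => ?_
        have := abs_functional_le_of_mem_symHex (α := 1) (β := 0) (γ := 0) (A := A) (B := B)
          (C := C) (by simp [hA]) (by simp [hB]) (by simp [hC]) hz
        simpa using this
      · exact key C hca hcb (hself C) hC
    · exact key B hba (hself B) hbc hB
  · exact key A (hself A) hab hac hA

/-- A hexagon which none of the three symmetrizations along short diagonals improves is regular. -/
lemma HexPosition.rigid {A B C : E2} (h : HexPosition A B C)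
    (h1 : A 0 ^ 2 + A 1 ^ 2 = C 0 ^ 2 + C 1 ^ 2) (h2 : B 0 ^ 2 + B 1 ^ 2 = A 0 ^ 2 + A 1 ^ 2)
    (hB : det2 A C < det2 A B + det2 B C → B 0 * (A 0 - C 0) + B 1 * (A 1 - C 1) = 0)
    (hC : det2 A B < det2 B C + det2 A C → C 0 * (B 0 + A 0) + C 1 * (B 1 + A 1) = 0)
    (hA : det2 B C < det2 A B + det2 A C → A 0 * (C 0 + B 0) + A 1 * (C 1 + B 1) = 0) :
    B = A + C := by
  have hρ : 0 < A 0 ^ 2 + A 1 ^ 2 := by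
    refine lt_of_le_of_ne (by positivity) fun e => ?_
    have e0 : A 0 = 0 := by nlinarith [sq_nonneg (A 0), sq_nonneg (A 1)]
    have e1 : A 1 = 0 := by nlinarith [sq_nonneg (A 0), sq_nonneg (A 1)]
    have := h.ab
    rw [det2, e0, e1] at this
    linarith
  obtain ⟨ha, hb, hc, hleB, hleC, hleA⟩ := h
  have rel0 := det2_relation A B C 0
  have rel1 := det2_relation A B C 1
  set a := det2 A B with hda
  set b := det2 B C with hdb
  set c := det2 A C with hdc
  set ρ := A 0 ^ 2 + A 1 ^ 2 with hρd
  set u := A 0 * C 0 + A 1 * C 1 with hu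
  set v := A 0 * B 0 + A 1 * B 1 with hv
  set w := B 0 * C 0 + B 1 * C 1 with hw
  have ea : a ^ 2 + v ^ 2 = ρ ^ 2 := by
    rw [sq ρ]
    nth_rw 2 [← h2]
    rw [hda, hv, hρd, det2]
    ring
  have eb : b ^ 2 + w ^ 2 = ρ ^ 2 := by
    rw [sq ρ]
    nth_rw 1 [← h2]
    rw [h1, hdb, hw, det2]
    ring
  have ec : c ^ 2 + u ^ 2 = ρ ^ 2 := by
    rw [sq ρ]
    nth_rw 2 [h1]
    rw [hdc, hu, hρd, det2]
    ring
  have eB : c ^ 2 * ρ = (a ^ 2 + b ^ 2) * ρ + 2 * a * b * u := by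
    have : c ^ 2 * (B 0 ^ 2 + B 1 ^ 2) = a ^ 2 * (C 0 ^ 2 + C 1 ^ 2) + b ^ 2 * ρ +
        2 * a * b * u := by
      rw [hρd, hu]
      linear_combination (c * B 0 + (a * C 0 + b * A 0)) * rel0 +
        (c * B 1 + (a * C 1 + b * A 1)) * rel1
    rw [h2, ← h1] at this
    linarith
  obtain ⟨huρ', huρ⟩ : -ρ < u ∧ u < ρ := abs_lt_of_sq_lt_sq' (by linarith [pow_pos hc 2]) hρ.le
  have hpos := mul_pos (mul_pos ha hb) (sub_pos.2 huρ)
  have hpos' := mul_pos (mul_pos ha hb) (sub_pos.2 huρ')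
  have hB' := hB (by
    refine lt_of_le_of_ne hleB fun e => hpos.ne' ?_
    linear_combination eB / 2 - (a + b + c) / 2 * ρ * e)
  have hC' := hC (by
    refine lt_of_le_of_ne hleC fun e => hpos'.ne' ?_
    linear_combination - (a - b + c) / 2 * ρ * e - eB / 2)
  have hA' := hA (by
    refine lt_of_le_of_ne hleA fun e => hpos'.ne' ?_
    linear_combination - (b - a + c) / 2 * ρ * e - eB / 2)
  have vw : v = w := by rw [hv, hw]; linarith
  have wu : w = -u := by rw [hu, hw]; linarith
  have hac : a = c := by
    have : a ^ 2 = c ^ 2 := by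
      rw [vw, wu] at ea
      linarith
    exact (sq_eq_sq₀ ha.le hc.le).1 this
  have hbc : b = c := by
    have : b ^ 2 = c ^ 2 := by
      rw [wu] at eb
      linarith
    exact (sq_eq_sq₀ hb.le hc.le).1 this
  rw [hac, hbc] at rel0 rel1
  ext i
  fin_cases i
  · simp only [Fin.zero_eta, PiLp.add_apply]
    apply mul_left_cancel₀ hc.ne'
    linarith
  · simp only [Fin.mk_one, PiLp.add_apply]
    apply mul_left_cancel₀ hc.ne'
    linarith

lemma stdHexagon_eq : stdHexagon =
    symHex !₂[1, 0] !₂[1 / 2, √3 / 2] !₂[-(1 / 2), √3 / 2] := by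
  have c1 : cos (π / 3) = 1 / 2 := cos_pi_div_three
  have s1 : sin (π / 3) = √3 / 2 := sin_pi_div_three
  have c2 : cos (2 * π / 3) = -(1 / 2) := by
    rw [show 2 * π / 3 = π - π / 3 by ring, cos_pi_sub, c1]
  have s2 : sin (2 * π / 3) = √3 / 2 := by
    rw [show 2 * π / 3 = π - π / 3 by ring, sin_pi_sub, s1]
  have e0 : hexVertex 0 = !₂[1, 0] := by
    simp [hexVertex, WithLp.equiv]
  have e1 : hexVertex 1 = !₂[1 / 2, √3 / 2] := by
    simp [hexVertex, WithLp.equiv]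
  have e2 : hexVertex 2 = !₂[-(1 / 2), √3 / 2] := by
    simp only [hexVertex, Nat.cast_ofNat, c2, s2]
    rfl
  have hadd (n : ℕ) : hexVertex (n + 3) = -hexVertex n := by
    simp only [hexVertex, Nat.cast_add, Nat.cast_ofNat,
      show ((n : ℝ) + 3) * π / 3 = n * π / 3 + π by ring, cos_add_pi, sin_add_pi]
    ext i
    fin_cases i <;> simp [WithLp.equiv]
  unfold stdHexagon symHex
  congr 1
  have e3 : hexVertex 3 = - hexVertex 0 := hadd 0
  have e4 : hexVertex 4 = - hexVertex 1 := hadd 1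
  have e5 : hexVertex 5 = - hexVertex 2 := hadd 2
  rw [← e0, ← e1, ← e2, ← e3, ← e4, ← e5]
  ext z
  have hf : (∃ i : Fin 6, hexVertex i = z) ↔ hexVertex 0 = z ∨ hexVertex 1 = z ∨
      hexVertex 2 = z ∨ hexVertex 3 = z ∨ hexVertex 4 = z ∨ hexVertex 5 = z := by
    constructor
    · rintro ⟨i, hi⟩
      fin_cases i <;> simp_all
    · rintro (h | h | h | h | h | h)
      exacts [⟨0, h⟩, ⟨1, h⟩, ⟨2, h⟩, ⟨3, h⟩, ⟨4, h⟩, ⟨5, h⟩]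
  rw [mem_range, hf]
  simp only [mem_insert_iff, mem_singleton_iff, eq_comm]

lemma isRegularHexagon_of_rigid {A B C : E2} (h : HexPosition A B C)
    (h1 : A 0 ^ 2 + A 1 ^ 2 = C 0 ^ 2 + C 1 ^ 2) (h2 : B 0 ^ 2 + B 1 ^ 2 = A 0 ^ 2 + A 1 ^ 2)
    (hB : B = A + C) (x₀ : E2) : IsRegularHexagon ((fun y => x₀ + y) '' symHex A B C) := by
  let L : E2 →ₗ[ℝ] E2 :=
    { toFun := fun z => !₂[z 0 * A 0 - z 1 * A 1, z 0 * A 1 + z 1 * A 0]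
      map_add' := fun x y => by
        ext i
        fin_cases i <;> simp <;> ring
      map_smul' := fun c x => by
        ext i
        fin_cases i <;> simp <;> ring }
  have hL0 (z : E2) : L z 0 = z 0 * A 0 - z 1 * A 1 := rfl
  have hL1 (z : E2) : L z 1 = z 0 * A 1 + z 1 * A 0 := rfl
  have hA : 0 < ‖A‖ := by
    refine norm_pos_iff.2 fun e => ?_
    have := h.ab
    rw [det2, e] at this
    simp at this
  have hnorm (z : E2) : ‖L z‖ = ‖A‖ * ‖z‖ := by
    rw [← sq_eq_sq₀ (norm_nonneg _) (by positivity), mul_pow, norm_sq_plane, norm_sq_plane,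
      norm_sq_plane, hL0, hL1]
    ring
  refine ⟨fun z => x₀ + L z, ⟨‖A‖, hA, fun x y => ?_⟩, ?_⟩
  · rw [dist_add_left, dist_eq_norm, ← map_sub, hnorm, dist_eq_norm]
  · rw [stdHexagon_eq, ← image_image (fun y => x₀ + y) L, image_symHex]
    set ρ := A 0 ^ 2 + A 1 ^ 2 with hρ
    have hB0 : B 0 = A 0 + C 0 := by rw [hB]; rfl
    have hB1 : B 1 = A 1 + C 1 := by rw [hB]; rfl
    have hρ0 : 0 < ρ := by
      rw [hρ, ← norm_sq_plane]
      positivity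
    have hu : A 0 * C 0 + A 1 * C 1 = - ρ / 2 := by
      rw [hB0, hB1] at h2
      linarith
    have hsq : det2 A C = √3 / 2 * ρ := by
      have : det2 A C ^ 2 = (√3 / 2 * ρ) ^ 2 := by
        rw [mul_pow, div_pow, Real.sq_sqrt (by norm_num)]
        have : det2 A C ^ 2 = ρ * ρ - (-ρ / 2) ^ 2 := by
          nth_rw 2 [h1]
          rw [← hu, hρ, det2]
          ring
        linarith
      exact (sq_eq_sq₀ h.ac.le (by positivity)).1 this
    have hC0 : C 0 = -(1 / 2) * A 0 - √3 / 2 * A 1 := by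
      apply mul_left_cancel₀ hρ0.ne'
      rw [det2] at hsq
      linear_combination A 0 * hu - A 1 * hsq + C 0 * hρ
    have hC1 : C 1 = -(1 / 2) * A 1 + √3 / 2 * A 0 := by
      apply mul_left_cancel₀ hρ0.ne'
      rw [det2] at hsq
      linear_combination A 1 * hu + A 0 * hsq + C 1 * hρ
    congr 2
    · ext i
      fin_cases i <;> simp [hL0, hL1]
    · ext i
      fin_cases i <;> simp [hL0, hL1, hB0, hB1, hC0, hC1] <;> ring
    · ext i
      fin_cases i <;> simp [hL0, hL1, hC0, hC1]

/-- A non-regular hexagon can be replaced by one of the same area with larger interaction. -/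
lemma exists_interaction_lt {k : ℝ → ℝ} (hk : IsProfile k) (hs : StrictAntiOn k (Ioi 0))
    {p q r x₀ : E2} {R : ℝ} (hp : ‖p‖ ≤ R) (hq : ‖q‖ ≤ R) (hr : ‖r‖ ≤ R)
    (hvol : volume (symHex p q r) ≠ 0)
    (hreg : ¬ IsRegularHexagon ((fun y => x₀ + y) '' symHex p q r)) :
    ∃ p' q' r' : E2, ‖p'‖ ≤ R ∧ ‖q'‖ ≤ R ∧ ‖r'‖ ≤ R ∧
      volume (symHex p' q' r') = volume (symHex p q r) ∧
      interaction k (symHex p q r) < interaction k (symHex p' q' r') := by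
  have hsub := symHex_subset_closedBall hp hq hr
  obtain ⟨A, B, C, h, hS⟩ : ∃ A B C : E2, HexPosition A B C ∧ symHex A B C = symHex p q r := by
    apply exists_hexPosition
    by_contra! hcon
    exact hvol (volume_symHex_eq_zero hcon.1 hcon.2.1 hcon.2.2)
  rw [← hS] at hsub hreg ⊢
  obtain ⟨hA, hB, hC, -⟩ := vertices_mem_symHex (A := A) (B := B) (C := C)
  replace hA := mem_closedBall_zero_iff.1 (hsub hA)
  replace hB := mem_closedBall_zero_iff.1 (hsub hB)
  replace hC := mem_closedBall_zero_iff.1 (hsub hC)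
  have e1 : det2 C (-A) = det2 A C := by rw [det2_neg_right, det2_swap, neg_neg]
  have e2 : det2 B (-A) = det2 A B := by rw [det2_neg_right, det2_swap, neg_neg]
  have e3 : det2 C (-B) = det2 B C := by rw [det2_neg_right, det2_swap, neg_neg]
  have e4 : det2 (-A) (-B) = det2 A B := by rw [det2_neg_right, det2_neg_left, neg_neg]
  by_contra hcon
  have n1 := mt (h.exists_steiner hk hs hA hB hC) hcon
  have n2 := mt (h.rotate.exists_steiner hk hs hB hC (by rwa [norm_neg]))
    (by rwa [symHex_rotate])
  have n3 := mt (h.rotate.rotate.exists_steiner hk hs hC (by rwa [norm_neg]) (by rwa [norm_neg]))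
    (by rwa [symHex_rotate, symHex_rotate])
  rw [e1, e2] at n2
  rw [e1, e3, e4] at n3
  push Not at n1 n2 n3
  simp only [PiLp.neg_apply, neg_sq] at n2 n3
  refine hreg (isRegularHexagon_of_rigid h n1.1 n2.1 ?_ x₀)
  refine h.rigid n1.1 n2.1 n1.2 (fun hlt => ?_) fun hlt => ?_
  · linarith [n2.2 (by linarith)]
  · linarith [n3.2 (by linarith)]

lemma symHex_subset_thickening {A B C A' B' C' : E2} {ε : ℝ} (hA : dist A A' < ε)
    (hB : dist B B' < ε) (hC : dist C C' < ε) :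
    symHex A B C ⊆ thickening ε (symHex A' B' C') := by
  obtain ⟨h1, h2, h3, h4, h5, h6⟩ := vertices_mem_symHex (A := A') (B := B') (C := C')
  apply symHex_subset_of_convex (convex_symHex.thickening ε) <;> rw [mem_thickening_iff]
  exacts [⟨_, h1, hA⟩, ⟨_, h2, hB⟩, ⟨_, h3, hC⟩, ⟨_, h4, by rwa [dist_neg_neg]⟩,
    ⟨_, h5, by rwa [dist_neg_neg]⟩, ⟨_, h6, by rwa [dist_neg_neg]⟩]

/-- If a ball is contained in a neighborhood of smaller radius of a closed convex set, then its
center belongs to this set. -/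
lemma mem_of_ball_subset_thickening {S : Set E2} (hS : Convex ℝ S) (hcl : IsClosed S)
    (hne : S.Nonempty) {z : E2} {ε δ : ℝ} (hδ : 0 < δ) (hδε : δ < ε)
    (h : ball z ε ⊆ thickening δ S) : z ∈ S := by
  by_contra hz
  obtain ⟨c, hc, hmin⟩ := exists_norm_eq_iInf_of_complete_convex hne hcl.isComplete hS z
  rw [norm_eq_iInf_iff_real_inner_le_zero hS hc] at hmin
  set d := z - c with hd
  have hd0 : 0 < ‖d‖ := norm_pos_iff.2 fun e => hz (by rwa [sub_eq_zero.1 e])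
  have hy : z + (δ / ‖d‖) • d ∈ ball z ε := by
    rw [mem_ball, dist_eq_norm, add_sub_cancel_left, norm_smul, norm_div, norm_norm,
      div_mul_cancel₀ _ hd0.ne', Real.norm_of_nonneg hδ.le]
    exact hδε
  obtain ⟨b, hb, hyb⟩ := mem_thickening_iff.1 (h hy)
  rw [dist_eq_norm] at hyb
  have h1 := hmin b hb
  have h2 := real_inner_le_norm d (z + (δ / ‖d‖) • d - b)
  have h3 : z + (δ / ‖d‖) • d - b = d + (δ / ‖d‖) • d - (b - c) := by
    rw [hd]
    abel
  have h4 : ⟪d, z + (δ / ‖d‖) • d - b⟫ = ‖d‖ ^ 2 + δ * ‖d‖ - ⟪d, b - c⟫ := by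
    rw [h3, inner_sub_right, inner_add_right, real_inner_smul_right, real_inner_self_eq_norm_sq]
    field_simp
  rw [h4] at h2
  nlinarith

/-- Membership in a hexagon is stable under perturbation of the vertices, away from the
boundary. -/
lemma eventually_mem_symHex_iff {v : E2 × E2 × E2} {z : E2}
    (hz : z ∉ frontier (symHex v.1 v.2.1 v.2.2)) :
    ∀ᶠ w : E2 × E2 × E2 in 𝓝 v,
      (z ∈ symHex w.1 w.2.1 w.2.2 ↔ z ∈ symHex v.1 v.2.1 v.2.2) := by
  have hnear {ε : ℝ} (hε : 0 < ε) : ∀ᶠ w : E2 × E2 × E2 in 𝓝 v,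
      dist w.1 v.1 < ε ∧ dist w.2.1 v.2.1 < ε ∧ dist w.2.2 v.2.2 < ε := by
    filter_upwards [ball_mem_nhds v hε] with w hw
    simpa [Prod.dist_eq] using hw
  by_cases hmem : z ∈ symHex v.1 v.2.1 v.2.2
  · have hint : z ∈ interior (symHex v.1 v.2.1 v.2.2) := by
      by_contra hcon
      exact hz ⟨subset_closure hmem, hcon⟩
    obtain ⟨ε, hε, hball⟩ := Metric.mem_nhds_iff.1 (mem_interior_iff_mem_nhds.1 hint)
    filter_upwards [hnear (half_pos hε)] with w hw
    refine iff_of_true (mem_of_ball_subset_thickening convex_symHex isCompact_symHex.isClosed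
      ⟨_, vertices_mem_symHex.1⟩ (half_pos hε) (half_lt_self hε) (hball.trans ?_)) hmem
    apply symHex_subset_thickening <;> rw [dist_comm]
    exacts [hw.1, hw.2.1, hw.2.2]
  · have hε := (isCompact_symHex.isClosed.notMem_iff_infDist_pos
      ⟨_, vertices_mem_symHex.1⟩).1 hmem
    filter_upwards [hnear hε] with w hw
    refine iff_of_false (fun hw' => ?_) hmem
    obtain ⟨b, hb, hlt⟩ := mem_thickening_iff.1
      (symHex_subset_thickening hw.1 hw.2.1 hw.2.2 hw')
    exact (infDist_le_dist_of_mem hb).not_gt hlt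

lemma ae_eventually_indicator_eq (v : E2 × E2 × E2) :
    ∀ᵐ z : E2, ∀ᶠ w : E2 × E2 × E2 in 𝓝 v,
      (symHex w.1 w.2.1 w.2.2).indicator (1 : E2 → ℝ≥0∞) z =
        (symHex v.1 v.2.1 v.2.2).indicator 1 z := by
  have hnull : ∀ᵐ z : E2, z ∉ frontier (symHex v.1 v.2.1 v.2.2) :=
    measure_eq_zero_iff_ae_notMem.1 (convex_symHex.addHaar_frontier volume)
  filter_upwards [hnull] with z hz
  filter_upwards [eventually_mem_symHex_iff hz] with w hw
  by_cases h : z ∈ symHex v.1 v.2.1 v.2.2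
  · rw [indicator_of_mem h, indicator_of_mem (hw.2 h)]
  · rw [indicator_of_notMem h, indicator_of_notMem (mt hw.1 h)]

lemma eventually_symHex_subset (v : E2 × E2 × E2) : ∀ᶠ w : E2 × E2 × E2 in 𝓝 v,
    symHex w.1 w.2.1 w.2.2 ⊆ closedBall 0 (‖v‖ + 1) := by
  filter_upwards [ball_mem_nhds v one_pos] with w hw
  have h : ‖w‖ ≤ ‖v‖ + 1 := by
    have := norm_le_norm_add_norm_sub' w v
    rw [mem_ball, dist_eq_norm] at hw
    linarith
  obtain ⟨h1, h2⟩ := norm_prod_le_iff.1 h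
  obtain ⟨h2, h3⟩ := norm_prod_le_iff.1 h2
  exact symHex_subset_closedBall h1 h2 h3

lemma continuous_volume_symHex :
    Continuous fun v : E2 × E2 × E2 => volume (symHex v.1 v.2.1 v.2.2) := by
  refine continuous_iff_continuousAt.2 fun v => ?_
  have hvol (S : Set E2) (hS : MeasurableSet S) : volume S = ∫⁻ z, S.indicator 1 z :=
    (lintegral_indicator_one hS).symm
  unfold ContinuousAt
  simp only [fun v : E2 × E2 × E2 => hvol (symHex v.1 v.2.1 v.2.2) measurableSet_symHex]
  refine tendsto_lintegral_filter_of_dominated_convergence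
    ((closedBall (0 : E2) (‖v‖ + 1)).indicator 1)
    (.of_forall fun w => measurable_one.indicator measurableSet_symHex) ?_ ?_ ?_
  · filter_upwards [eventually_symHex_subset v] with w hw
    exact .of_forall fun z => indicator_le_indicator_of_subset hw (by simp) z
  · rw [lintegral_indicator_one measurableSet_closedBall]
    exact measure_closedBall_lt_top.ne
  · filter_upwards [ae_eventually_indicator_eq v] with z hz
    exact tendsto_nhds_of_eventually_eq hz

lemma IsProfile.continuous_interaction {k : ℝ → ℝ} (hk : IsProfile k) :
    Continuous fun v : E2 × E2 × E2 => interaction k (symHex v.1 v.2.1 v.2.2) := by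
  refine continuous_iff_continuousAt.2 fun v => ?_
  have hint {S : Set E2} (hS : MeasurableSet S) : interaction k S =
      ∫⁻ q : E2 × E2, S.indicator 1 q.1 * (S.indicator 1 q.2 * extProfile k (dist q.1 q.2))
        ∂(volume.prod volume) := by
    rw [hk.interaction_eq_prod hS,
      lintegral_prod _ (hk.measurable_plane_interaction hS).aemeasurable]
  unfold ContinuousAt
  simp only [fun v : E2 × E2 × E2 => hint (S := symHex v.1 v.2.1 v.2.2) measurableSet_symHex]
  have hball : MeasurableSet (closedBall (0 : E2) (‖v‖ + 1)) := measurableSet_closedBall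
  refine tendsto_lintegral_filter_of_dominated_convergence _
    (.of_forall fun w => hk.measurable_plane_interaction measurableSet_symHex) ?_
    ((hint hball).symm.trans_lt (hk.interaction_lt_top subset_rfl hball)).ne ?_
  · filter_upwards [eventually_symHex_subset v] with w hw
    refine .of_forall fun q => ?_
    gcongr
  · have h1 := Measure.quasiMeasurePreserving_fst (μ := (volume : Measure E2))
      (ν := (volume : Measure E2)) |>.ae (ae_eventually_indicator_eq v)
    have h2 := Measure.quasiMeasurePreserving_snd (μ := (volume : Measure E2))
      (ν := (volume : Measure E2)) |>.ae (ae_eventually_indicator_eq v)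
    filter_upwards [h1, h2] with q hq1 hq2
    refine tendsto_nhds_of_eventually_eq ?_
    filter_upwards [hq1, hq2] with w hw1 hw2
    rw [hw1, hw2]

open scoped Pointwise in
lemma IsSimilarity.exists_affineIsometry {f : E2 → E2} (hf : IsSimilarity f) :
    ∃ s : ℝ, 0 < s ∧ ∃ T : E2 ≃ᵃⁱ[ℝ] E2, ∀ S : Set E2, f '' S = T '' (s • S) := by
  obtain ⟨s, hs, hf⟩ := hf
  have hiso : Isometry fun x => f (s⁻¹ • x) := by
    refine Isometry.of_dist_eq fun x y => ?_
    rw [hf, dist_smul₀, Real.norm_of_nonneg (inv_nonneg.2 hs.le), mul_inv_cancel_left₀ hs.ne']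
  refine ⟨s, hs, hiso.affineIsometryOfStrictConvexSpace.toAffineIsometryEquiv rfl, fun S => ?_⟩
  simp only [AffineIsometry.coe_toAffineIsometryEquiv, Isometry.coe_affineIsometryOfStrictConvexSpace]
  rw [← image_smul, image_image]
  simp [smul_smul, hs.ne']

lemma IsRegularHexagon.interaction_eq {H H' : Set E2} (k : ℝ → ℝ) (hH : IsRegularHexagon H)
    (hH' : IsRegularHexagon H') (hvol : volume H = 1) (hvol' : volume H' = 1) :
    interaction k H = interaction k H' := by
  obtain ⟨f, hf, rfl⟩ := hH
  obtain ⟨f', hf', rfl⟩ := hH'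
  obtain ⟨s, hs, T, hT⟩ := hf.exists_affineIsometry
  obtain ⟨s', hs', T', hT'⟩ := hf'.exists_affineIsometry
  rw [hT, volume_image_affineIsometry, Measure.addHaar_smul] at hvol
  rw [hT', volume_image_affineIsometry, Measure.addHaar_smul] at hvol'
  rw [hT, hT', interaction_image, interaction_image]
  suffices s = s' by rw [this]
  have h0 : volume stdHexagon ≠ 0 := by
    intro h
    simp [h] at hvol
  have htop : volume stdHexagon ≠ ⊤ := by
    rw [stdHexagon_eq]
    exact isCompact_symHex.measure_lt_top.ne
  have := (ENNReal.mul_left_inj h0 htop).1 (hvol.trans hvol'.symm)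
  rw [ENNReal.ofReal_eq_ofReal_iff (abs_nonneg _) (abs_nonneg _), finrank_euclideanSpace_fin,
    abs_of_nonneg (by positivity), abs_of_nonneg (by positivity)] at this
  exact (sq_eq_sq₀ hs.le hs'.le).1 this

lemma IsRegularHexagon.isCompact {H : Set E2} (hH : IsRegularHexagon H) : IsCompact H := by
  obtain ⟨f, hf, rfl⟩ := hH
  obtain ⟨s, hs, T, hT⟩ := hf.exists_affineIsometry
  rw [hT, stdHexagon_eq]
  exact (isCompact_symHex.smul s).image T.continuous

lemma IsProfile.rieszEnergy_eq_of_isCompact {k : ℝ → ℝ} (hk : IsProfile k) {H : Set E2}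
    (hH : IsCompact H) : rieszEnergy k H = -(interaction k H).toReal ∧ interaction k H ≠ ⊤ := by
  obtain ⟨R, hR⟩ := hH.isBounded.subset_closedBall 0
  exact ⟨hk.rieszEnergy_eq hR hH.measurableSet, (hk.interaction_lt_top hR hH.measurableSet).ne⟩

/-- The isoperimetric inequality for a strictly decreasing profile. -/
lemma IsProfile.interaction_le_of_strictAnti {k : ℝ → ℝ} (hk : IsProfile k)
    (hs : StrictAntiOn k (Ioi 0)) {H : Set E2} (hH : IsRegularHexagon H) (hvol : volume H = 1)
    {p q r : E2} (hpqr : volume (symHex p q r) = 1) :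
    interaction k (symHex p q r) ≤ interaction k H := by
  set R := ‖(p, q, r)‖ with hR
  have hcompact : IsCompact (closedBall (0 : E2 × E2 × E2) R ∩
      {v | volume (symHex v.1 v.2.1 v.2.2) = 1}) :=
    (isCompact_closedBall _ _).inter_right
      (isClosed_singleton.preimage continuous_volume_symHex)
  have hmem : (p, q, r) ∈ closedBall (0 : E2 × E2 × E2) R ∩
      {v | volume (symHex v.1 v.2.1 v.2.2) = 1} := ⟨by simp [hR], hpqr⟩
  obtain ⟨⟨p₁, q₁, r₁⟩, ⟨hv, hv1⟩, hmax⟩ :=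
    hcompact.exists_isMaxOn ⟨_, hmem⟩ hk.continuous_interaction.continuousOn
  replace hv1 : volume (symHex p₁ q₁ r₁) = 1 := hv1
  rw [mem_closedBall_zero_iff] at hv
  obtain ⟨h1, h2⟩ := norm_prod_le_iff.1 hv
  obtain ⟨h2, h3⟩ := norm_prod_le_iff.1 h2
  have hreg : IsRegularHexagon (symHex p₁ q₁ r₁) := by
    by_contra hcon
    obtain ⟨p', q', r', hp', hq', hr', hvol', hlt⟩ := exists_interaction_lt hk hs h1 h2 h3
      (x₀ := 0) (by simp [hv1]) (by simpa using hcon)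
    refine (hmax (a := (p', q', r')) ⟨?_, hvol'.trans hv1⟩).not_gt hlt
    rw [mem_closedBall_zero_iff]
    exact norm_prod_le_iff.2 ⟨hp', norm_prod_le_iff.2 ⟨hq', hr'⟩⟩
  rw [hH.interaction_eq k hreg hvol hv1]
  exact hmax hmem

lemma isProfile_exp {ε : ℝ} (hε : 0 ≤ ε) : IsProfile fun r => ε * exp (-r) where
  anti := fun x _ y _ hxy => by
    dsimp only
    gcongr
  nonneg := fun r _ => by positivity
  integrableOn := by
    have : Continuous fun r : ℝ => ε * exp (-r) := by fun_prop
    exact this.integrableOn_Ioc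

/-- The isoperimetric inequality for the interaction of hexagons of unit area. -/
lemma IsProfile.interaction_le {k : ℝ → ℝ} (hk : IsProfile k) {H : Set E2}
    (hH : IsRegularHexagon H) (hvol : volume H = 1) {p q r : E2}
    (hpqr : volume (symHex p q r) = 1) : interaction k (symHex p q r) ≤ interaction k H := by
  refine ENNReal.le_of_forall_pos_le_add fun ε hε _ => ?_
  have hε' : (0 : ℝ) < ε := hε
  set g : ℝ → ℝ := fun r => k r + ε * exp (-r) with hg
  have hgp : IsProfile g := hk.add (isProfile_exp hε'.le)
  have hgs : StrictAntiOn g (Ioi 0) := fun x hx y hy hxy => by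
    have h1 := hk.anti hx hy hxy.le
    have h2 : ε * exp (-y) < ε * exp (-x) := by gcongr
    simp only [hg]
    linarith
  calc interaction k (symHex p q r) ≤ interaction g (symHex p q r) :=
        interaction_mono (fun r _ => by simp only [hg]; linarith [mul_pos hε' (exp_pos (-r))]) _
    _ ≤ interaction g H := hgp.interaction_le_of_strictAnti hgs hH hvol hpqr
    _ ≤ interaction k H + ε := interaction_le_add (fun r hr => by
        have : exp (-r) ≤ 1 := exp_le_one_iff.2 (by linarith)
        simp only [hg]
        nlinarith) hk hvol

lemma translate_eq_image (x₀ : E2) (S : Set E2) :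
    (fun y => x₀ + y) '' S = AffineIsometryEquiv.constVAdd ℝ E2 x₀ '' S := rfl

lemma hex_symHex {p q r : E2} (h : volume (symHex p q r) ≠ 0) : Hex (symHex p q r) := by
  refine ⟨⟨0, p, q, r, by simp [symHex]⟩, ?_⟩
  by_contra hcon
  rw [not_nonempty_iff_eq_empty] at hcon
  refine h (measure_mono_null (fun z hz => ?_)
    ((convex_symHex (A := p) (B := q) (C := r)).addHaar_frontier volume))
  exact ⟨subset_closure hz, by simp [hcon]⟩

/-- For a nonnegative, nonincreasing, locally integrable, positive
definite radial kernel the regular hexagon minimizes the Riesz-type energy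
`𝓡(E) = −∫_E∫_E K(x−y)` among unit-area elements of `𝓗`; if moreover `k` is strictly
decreasing on `(0, ∞)`, every minimizer is a regular hexagon. -/
theorem statement11 (k : ℝ → ℝ)
    (hmono : AntitoneOn k (Set.Ioi (0 : ℝ)))
    (hpos : ∀ r : ℝ, 0 < r → 0 ≤ k r)
    (hint : MeasureTheory.IntegrableOn k (Set.Ioc (0 : ℝ) 1))
    (hposdef : ∀ f : E2 → ℝ, Continuous f → HasCompactSupport f →
      0 ≤ ∫ x : E2, ∫ y : E2, k (dist x y) * f x * f y) :
    (∀ Hstar : Set E2, IsRegularHexagon Hstar → volume Hstar = 1 →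
      ∀ H : Set E2, Hex H → volume H = 1 → rieszEnergy k Hstar ≤ rieszEnergy k H) ∧
    (StrictAntiOn k (Set.Ioi (0 : ℝ)) →
      ∀ H : Set E2, Hex H → volume H = 1 →
        (∀ H' : Set E2, Hex H' → volume H' = 1 → rieszEnergy k H ≤ rieszEnergy k H') →
        IsRegularHexagon H) := by
  have hk : IsProfile k := ⟨hmono, hpos, hint⟩
  have hcompact (x₀ p q r : E2) : IsCompact ((fun y => x₀ + y) '' symHex p q r) :=
    isCompact_symHex.image (by fun_prop)
  constructor
  · rintro Hstar hreg hvol H ⟨⟨x₀, p, q, r, rfl⟩, -⟩ hH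
    change volume ((fun y => x₀ + y) '' symHex p q r) = 1 at hH
    change _ ≤ rieszEnergy k ((fun y => x₀ + y) '' symHex p q r)
    obtain ⟨h1, h1'⟩ := hk.rieszEnergy_eq_of_isCompact hreg.isCompact
    obtain ⟨h2, h2'⟩ := hk.rieszEnergy_eq_of_isCompact (hcompact x₀ p q r)
    rw [h1, h2, neg_le_neg_iff, ENNReal.toReal_le_toReal h2' h1', translate_eq_image,
      interaction_image]
    rw [translate_eq_image, volume_image_affineIsometry] at hH
    exact hk.interaction_le hreg hvol hH
  · rintro hs H ⟨⟨x₀, p, q, r, rfl⟩, -⟩ hH hmin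
    change volume ((fun y => x₀ + y) '' symHex p q r) = 1 at hH
    change ∀ H', _ → _ → rieszEnergy k ((fun y => x₀ + y) '' symHex p q r) ≤ _ at hmin
    change IsRegularHexagon ((fun y => x₀ + y) '' symHex p q r)
    rw [translate_eq_image, volume_image_affineIsometry] at hH
    by_contra hcon
    obtain ⟨p', q', r', -, -, -, hvol', hlt⟩ := exists_interaction_lt hk hs (R := ‖(p, q, r)‖)
      (norm_fst_le (p, q, r)) ((norm_fst_le (q, r)).trans (norm_snd_le (p, q, r)))
      ((norm_snd_le (q, r)).trans (norm_snd_le (p, q, r))) (by simp [hH]) hcon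
    rw [hH] at hvol'
    have hle := hmin _ (hex_symHex (by simp [hvol'])) hvol'
    obtain ⟨h1, h1'⟩ := hk.rieszEnergy_eq_of_isCompact (hcompact x₀ p q r)
    obtain ⟨h2, h2'⟩ := hk.rieszEnergy_eq_of_isCompact (isCompact_symHex (A := p') (B := q')
      (C := r'))
    rw [h1, h2, neg_le_neg_iff, ENNReal.toReal_le_toReal h2' h1', translate_eq_image,
      interaction_image] at hle
    exact hle.not_gt hlt
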